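/- arXiv:math/0403171 — 3 statements merged into one kernel-verified Lean document; each statement's English description precedes it below -/
import Mathlib

section
/- In the Coxeter setting below, assume moreover that W is finite and let w_0 be its longest element. Then: (a) for every continuous path π : [0,T] → V with π(0) = 0, the path P_{w_0} π takes values in the closed Weyl chamber C̄ = { v ∈ V : α_s∨(v) ≥ 0 for all s ∈ S }; (b) P_{w_0} ∘ P_{w_0} = P_{w_0}; (c) for every w ∈ W, P_w ∘ P_{w_0} = P_{w_0} ∘ P_w = P_{w_0}. -/
/-- The Pitman transform associated with a pair `(α, α∨)`:
`P_α π (t) = π t − (inf_{0 ≤ s ≤ t} α∨(π s)) • α`. -/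
noncomputable def pitman {V : Type*} [AddCommGroup V] [Module ℝ V]
    (α : V) (αv : Module.Dual ℝ V) (π : ℝ → V) : ℝ → V :=
  fun t => π t - sInf ((fun s => αv (π s)) '' Set.Icc 0 t) • α

/-- The composite Pitman transform `P_{α_{s₁}} ∘ ⋯ ∘ P_{α_{s_l}}` along a word
`l = [s₁, …, s_l]` in the generators. -/
noncomputable def pitmanWord {V : Type*} [AddCommGroup V] [Module ℝ V] {B : Type*}
    (α : B → V) (αv : B → Module.Dual ℝ V) (l : List B) : (ℝ → V) → (ℝ → V) :=
  l.foldr (fun s f => pitman (α s) (αv s) ∘ f) id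

/-!
The Pitman transforms satisfy the braid relations. After rescaling the two simple roots, the
coroot pairings in rank two are `-2 cos (π / m)`, and the coordinates of an alternating product of
`k` transforms are infima of sums `τ₀ z(u₀) + τ₁ z'(u₁) + ⋯` over `t ≥ u₀ ≥ u₁ ≥ ⋯ ≥ 0` with weights
`τⱼ = sin ((j + 1) π / m) / sin (π / m)`. These weights are nonnegative for `j < m` and
`τ_{m - 1} = 0`, so at `k = m` the two alternating products agree. By Matsumoto's theorem `P_w` does
not depend on the reduced word.

The longest element has reduced words beginning with any given `s` and ending with any given `s`.
The former show that `P_{w₀} π` has nonnegative `s`-coordinate, so every Pitman transform fixes it;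
the latter, since each `P_s` is idempotent, that `P_{w₀} ∘ P_s = P_{w₀}`.
-/

/-! ### The running infimum -/

section RunningInfimum

variable {f γ F : ℝ → ℝ} {c t u : ℝ}

/-- The running infimum `t ↦ inf_{0 ≤ u ≤ t} f u` of a real function on the half-line. It takes
the junk value `0` at negative times, where `Set.Icc 0 t` is empty. -/
noncomputable def runInf (f : ℝ → ℝ) (t : ℝ) : ℝ := sInf (f '' Set.Icc 0 t)

theorem runInf_of_neg (f : ℝ → ℝ) (ht : t < 0) : runInf f t = 0 := by
  simp [runInf, Set.Icc_eq_empty_of_lt ht]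

theorem runInf_apply_zero (f : ℝ → ℝ) : runInf f 0 = f 0 := by simp [runInf]

theorem runInf_congr {g : ℝ → ℝ} (h : Set.EqOn f g (Set.Icc 0 t)) : runInf f t = runInf g t := by
  rw [runInf, runInf, h.image_eq]

theorem runInf_const_mul (hc : 0 ≤ c) (f : ℝ → ℝ) (t : ℝ) :
    runInf (fun u => c * f u) t = c * runInf f t := by
  rw [runInf, runInf, ← smul_eq_mul, ← Real.sInf_smul_of_nonneg hc, ← Set.image_smul,
    Set.image_image]
  rfl

theorem runInf_eq_zero (h₀ : f 0 = 0) (h : ∀ u, 0 ≤ u → 0 ≤ f u) (t : ℝ) : runInf f t = 0 := by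
  rcases lt_or_ge t 0 with ht | ht
  · exact runInf_of_neg f ht
  · exact IsLeast.csInf_eq
      ⟨⟨0, ⟨le_rfl, ht⟩, h₀⟩, Set.forall_mem_image.mpr fun u hu => h u hu.1⟩

theorem runInf_zero : runInf (fun _ => 0) = fun _ => 0 :=
  funext (runInf_eq_zero rfl fun _ _ => le_rfl)

theorem exists_runInf_eq (hf : ContinuousOn f (Set.Ici 0)) (ht : 0 ≤ t) :
    ∃ u ∈ Set.Icc 0 t, runInf f t = f u :=
  isCompact_Icc.exists_sInf_image_eq (Set.nonempty_Icc.mpr ht)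
    (hf.mono Set.Icc_subset_Ici_self)

theorem runInf_le (hf : ContinuousOn f (Set.Ici 0)) (hu : 0 ≤ u) (hut : u ≤ t) :
    runInf f t ≤ f u :=
  (hf.mono Set.Icc_subset_Ici_self).sInf_image_Icc_le ⟨hu, hut⟩

theorem le_runInf (ht : 0 ≤ t) (h : ∀ u ∈ Set.Icc 0 t, c ≤ f u) : c ≤ runInf f t :=
  le_csInf ((Set.nonempty_Icc.mpr ht).image f) (Set.forall_mem_image.mpr h)

theorem runInf_le_runInf (hf : ContinuousOn f (Set.Ici 0)) (hu : 0 ≤ u) (hut : u ≤ t) :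
    runInf f t ≤ runInf f u :=
  le_runInf hu fun _ hx => runInf_le hf hx.1 (hx.2.trans hut)

theorem runInf_eq_sInf_image_mul (ht : 0 ≤ t) :
    runInf f t = sInf ((fun x => f (t * x)) '' Set.Icc 0 1) := by
  have hIcc : (fun x => t * x) '' Set.Icc 0 1 = Set.Icc 0 t := by
    simpa using Set.image_mul_left_Icc ht zero_le_one
  rw [runInf, ← hIcc, Set.image_image]

theorem continuousOn_runInf (hf : ContinuousOn f (Set.Ici 0)) :
    ContinuousOn (runInf f) (Set.Ici 0) := by
  have hmax : Continuous fun x => f (max 0 x) :=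
    hf.comp_continuous (by fun_prop) fun x => Set.mem_Ici.mpr (le_max_left 0 x)
  have hinf : Continuous fun t : ℝ => sInf ((fun x => f (max 0 (t * x))) '' Set.Icc 0 1) :=
    isCompact_Icc.continuous_sInf (hmax.comp continuous_mul)
  refine hinf.continuousOn.congr fun t ht => ?_
  rw [runInf_eq_sInf_image_mul ht]
  congr 1
  exact Set.image_congr fun x hx => by rw [max_eq_right (mul_nonneg ht hx.1)]

theorem exists_eq_runInf_of_le (hf : ContinuousOn f (Set.Ici 0)) (hu : 0 ≤ u) (hut : u ≤ t)
    (ht : f t ≤ runInf f u) : ∃ v ∈ Set.Icc u t, f v = runInf f u :=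
  intermediate_value_Icc' hut (hf.mono fun _ hx => hu.trans hx.1)
    ⟨ht, runInf_le hf hu le_rfl⟩

theorem exists_first_eq_runInf_of_lt (hf : ContinuousOn f (Set.Ici 0)) (hu : 0 ≤ u) (hut : u ≤ t)
    (hlt : runInf f t < runInf f u) :
    ∃ v ∈ Set.Icc u t, f v = runInf f u ∧ runInf f v = runInf f u := by
  obtain ⟨w, ⟨hw₀, hwt⟩, hw⟩ := exists_runInf_eq hf (hu.trans hut)
  have hfw : f w ≤ runInf f u := hw ▸ hlt.le
  have huw : u ≤ w := by
    by_contra! hwu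
    linarith [runInf_le hf hw₀ hwu.le]
  have hcompact : IsCompact (Set.Icc u w ∩ f ⁻¹' {runInf f u}) :=
    isCompact_Icc.of_isClosed_subset
      ((hf.mono fun _ hx => hu.trans hx.1).preimage_isClosed_of_isClosed isClosed_Icc
        isClosed_singleton) Set.inter_subset_left
  obtain ⟨v, ⟨⟨huv, hvw⟩, hfv⟩, hleast⟩ :=
    hcompact.exists_isLeast (exists_eq_runInf_of_le hf hu huw hfw)
  have hfv : f v = runInf f u := hfv
  refine ⟨v, ⟨huv, hvw.trans hwt⟩, hfv, (runInf_le_runInf hf hu huv).antisymm ?_⟩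
  refine le_runInf (hu.trans huv) fun x ⟨hx₀, hxv⟩ => ?_
  rcases le_total x u with hxu | hux
  · exact runInf_le hf hx₀ hxu
  · by_contra! hfx
    obtain ⟨y, ⟨huy, hyx⟩, hfy⟩ := exists_eq_runInf_of_le hf hu hux hfx.le
    have hvy : v ≤ y := hleast ⟨⟨huy, (hyx.trans hxv).trans hvw⟩, hfy⟩
    rw [hxv.antisymm (hvy.trans hyx), hfv] at hfx
    exact lt_irrefl _ hfx

theorem exists_reflected_le (hγ : ContinuousOn γ (Set.Ici 0)) {v : ℝ} (hu : 0 ≤ u) (huv : u ≤ v)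
    (hvt : v ≤ t) :
    ∃ w ∈ Set.Icc u t, γ w - 2 * runInf γ w + runInf γ u ≤ γ v - runInf γ t := by
  have huv_inf := runInf_le_runInf hγ hu huv
  have hvt_inf := runInf_le_runInf hγ (hu.trans huv) hvt
  rcases (hvt_inf.trans huv_inf).eq_or_lt with heq | hlt
  · exact ⟨v, ⟨huv, hvt⟩, by linarith⟩
  · obtain ⟨w, hw, hγw, hΓw⟩ := exists_first_eq_runInf_of_lt hγ hu (huv.trans hvt) hlt
    exact ⟨w, hw, by linarith [runInf_le hγ (hu.trans huv) hvt]⟩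

theorem exists_le_reflected (hγ : ContinuousOn γ (Set.Ici 0)) {v : ℝ} (hu : 0 ≤ u) (huv : u ≤ v)
    (hvt : v ≤ t) :
    ∃ w ∈ Set.Icc u t, γ w - runInf γ t ≤ γ v - 2 * runInf γ v + runInf γ u := by
  have hv := hu.trans huv
  have huv_inf := runInf_le_runInf hγ hu huv
  obtain ⟨w, ⟨hw, hwt⟩, hγw⟩ := exists_runInf_eq hγ (hv.trans hvt)
  rcases le_total u w with huw | hwu
  · exact ⟨w, ⟨huw, hwt⟩, by linarith [runInf_le hγ hv le_rfl]⟩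
  · exact ⟨v, ⟨huv, hvt⟩, by linarith [runInf_le hγ hw hwu, runInf_le_runInf hγ hv hvt]⟩

/- Both sides are infima over `u ≤ v ≤ t` of `F u + c * _`; the two preceding lemmas move `v`
within `[u, t]` so as to compare the coefficients of `c`. -/
theorem runInf_reflected_add_runInf (hγ : ContinuousOn γ (Set.Ici 0))
    (hF : ContinuousOn F (Set.Ici 0)) (hc : 0 ≤ c) (t : ℝ) :
    runInf (fun v => c * (γ v - 2 * runInf γ v) + runInf (fun u => F u + c * runInf γ u) v) t =
      runInf (fun v => c * γ v + runInf F v) t - c * runInf γ t := by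
  rcases lt_or_ge t 0 with ht | ht
  · simp [runInf_of_neg _ ht]
  have hΓ := continuousOn_runInf hγ
  have hFΓ : ContinuousOn (fun u => F u + c * runInf γ u) (Set.Ici 0) := by fun_prop
  have hinfF := continuousOn_runInf hF
  have hinfFΓ := continuousOn_runInf hFΓ
  have hleft : ContinuousOn (fun v => c * (γ v - 2 * runInf γ v) +
      runInf (fun u => F u + c * runInf γ u) v) (Set.Ici 0) := by fun_prop
  have hright : ContinuousOn (fun v => c * γ v + runInf F v) (Set.Ici 0) := by fun_prop
  apply le_antisymm
  · obtain ⟨v, ⟨hv, hvt⟩, hinf⟩ := exists_runInf_eq hright ht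
    obtain ⟨u, ⟨hu, huv⟩, hinf'⟩ := exists_runInf_eq hF hv
    obtain ⟨w, ⟨huw, hwt⟩, hw⟩ := exists_reflected_le hγ hu huv hvt
    rw [hinf, hinf']
    linarith [runInf_le hleft (hu.trans huw) hwt, runInf_le hFΓ hu huw,
      mul_le_mul_of_nonneg_left hw hc]
  · obtain ⟨v, ⟨hv, hvt⟩, hinf⟩ := exists_runInf_eq hleft ht
    obtain ⟨u, ⟨hu, huv⟩, hinf'⟩ := exists_runInf_eq hFΓ hv
    obtain ⟨w, ⟨huw, hwt⟩, hw⟩ := exists_le_reflected hγ hu huv hvt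
    rw [hinf, hinf']
    linarith [runInf_le hright (hu.trans huw) hwt, runInf_le hF hu huw,
      mul_le_mul_of_nonneg_left hw hc]

end RunningInfimum

/-! ### Nested running infima -/

section NestedInfimum

variable {τ : ℕ → ℝ} {r : ℝ} {γ z z' : ℝ → ℝ}

/-- The infimum of `τ 0 * z u₀ + τ 1 * z' u₁ + τ 2 * z u₂ + ⋯` (with `j` summands) over
`t ≥ u₀ ≥ u₁ ≥ ⋯ ≥ 0`, as a function of `t`. The coordinates of iterated rank-two Pitman transforms
are of this form. -/
noncomputable def nestedInf (τ : ℕ → ℝ) : ℕ → (ℝ → ℝ) → (ℝ → ℝ) → ℝ → ℝ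
  | 0, _, _ => fun _ => 0
  | j + 1, z, z' => runInf fun u => τ 0 * z u + nestedInf (fun k => τ (k + 1)) j z' z u

theorem nestedInf_succ (τ : ℕ → ℝ) (j : ℕ) (z z' : ℝ → ℝ) : nestedInf τ (j + 1) z z' =
    runInf fun u => τ 0 * z u + nestedInf (fun k => τ (k + 1)) j z' z u := rfl

theorem continuousOn_nestedInf (τ : ℕ → ℝ) (j : ℕ) (hz : ContinuousOn z (Set.Ici 0))
    (hz' : ContinuousOn z' (Set.Ici 0)) : ContinuousOn (nestedInf τ j z z') (Set.Ici 0) := by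
  induction j generalizing τ z z' with
  | zero => exact continuousOn_const
  | succ j ih =>
    have := ih (fun k => τ (k + 1)) hz' hz
    exact continuousOn_runInf (by fun_prop)

theorem nestedInf_succ_of_eq_zero {j : ℕ} (hτ : τ j = 0) (z z' : ℝ → ℝ) :
    nestedInf τ (j + 1) z z' = nestedInf τ j z z' := by
  induction j generalizing τ z z' with
  | zero => simp only [nestedInf, hτ, zero_mul, add_zero, runInf_zero]
  | succ j ih => rw [nestedInf_succ, ih (τ := fun k => τ (k + 1)) hτ, nestedInf_succ τ j]

theorem nestedInf_reflected_even (hτ : ∀ k, τ (k + 2) = 2 * r * τ (k + 1) - τ k)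
    (hγ : ContinuousOn γ (Set.Ici 0)) (hz : ContinuousOn z (Set.Ici 0)) {i : ℕ}
    (hpos : ∀ k ≤ 2 * i, 0 ≤ τ k) :
    nestedInf τ (2 * i) (fun u => γ u - 2 * runInf γ u) (fun u => z u + 2 * r * runInf γ u) =
      fun t => nestedInf τ (2 * i + 1) γ z t - τ 0 * runInf γ t := by
  induction i generalizing τ with
  | zero =>
    funext t
    simp [nestedInf, runInf_const_mul (hpos 0 le_rfl)]
  | succ i ih =>
    have hF : ContinuousOn
        (fun u => τ 1 * z u + nestedInf (fun k => τ (k + 2)) (2 * i + 1) γ z u) (Set.Ici 0) := by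
      have := continuousOn_nestedInf (fun k => τ (k + 2)) (2 * i + 1) hγ hz
      fun_prop
    funext t
    have hih := ih (τ := fun k => τ (k + 2)) (fun k => hτ (k + 2))
      fun k hk => hpos (k + 2) (by omega)
    rw [show 2 * (i + 1) = 2 * i + 1 + 1 by ring, nestedInf_succ, nestedInf_succ, hih,
      nestedInf_succ τ, nestedInf_succ _ (2 * i + 1),
      ← runInf_reflected_add_runInf hγ hF (hpos 0 (by omega)) t]
    congr! 5 with v u
    linear_combination -runInf γ u * hτ 0

theorem nestedInf_reflected_odd (hτ : ∀ k, τ (k + 2) = 2 * r * τ (k + 1) - τ k)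
    (hτ₁ : τ 1 = 2 * r * τ 0) (hγ : ContinuousOn γ (Set.Ici 0))
    (hz : ContinuousOn z (Set.Ici 0)) {i : ℕ} (hpos : ∀ k ≤ 2 * i + 1, 0 ≤ τ k) :
    nestedInf τ (2 * i + 1) (fun u => z u + 2 * r * runInf γ u) (fun u => γ u - 2 * runInf γ u) =
      nestedInf τ (2 * i + 2) z γ := by
  rw [nestedInf_succ, nestedInf_succ, nestedInf_reflected_even (τ := fun k => τ (k + 1))
    (fun k => hτ (k + 1)) hγ hz fun k hk => hpos (k + 1) (by omega)]
  congr 1 with u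
  linear_combination -runInf γ u * hτ₁

end NestedInfimum

/-! ### Pitman transforms and the braid relations -/

section ChebyshevWeight

/-- The value at `r` of the `k`-th Chebyshev polynomial of the second kind; at `r = cos θ` it equals
`sin ((k + 1) θ) / sin θ`. These are the weights of the nested infima in rank two. -/
noncomputable def chebyshevWeight (r : ℝ) (k : ℕ) : ℝ := (Polynomial.Chebyshev.U ℝ k).eval r

theorem chebyshevWeight_zero (r : ℝ) : chebyshevWeight r 0 = 1 := by simp [chebyshevWeight]

theorem chebyshevWeight_one (r : ℝ) : chebyshevWeight r 1 = 2 * r := by simp [chebyshevWeight]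

theorem chebyshevWeight_add_two (r : ℝ) (k : ℕ) :
    chebyshevWeight r (k + 2) = 2 * r * chebyshevWeight r (k + 1) - chebyshevWeight r k := by
  simp [chebyshevWeight, Polynomial.Chebyshev.U_add_two]

theorem sin_pi_div_pos {m : ℕ} (hm : 2 ≤ m) : 0 < Real.sin (Real.pi / m) := by
  have hm' : (1 : ℝ) < m := by exact_mod_cast hm
  exact Real.sin_pos_of_pos_of_lt_pi (by positivity) (div_lt_self Real.pi_pos hm')

theorem chebyshevWeight_cos_mul_sin (θ : ℝ) (k : ℕ) :
    chebyshevWeight (Real.cos θ) k * Real.sin θ = Real.sin ((k + 1) * θ) := by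
  simp [chebyshevWeight]

theorem chebyshevWeight_cos_pi_div_nonneg {m k : ℕ} (hm : 2 ≤ m) (hk : k + 1 ≤ m) :
    0 ≤ chebyshevWeight (Real.cos (Real.pi / m)) k := by
  have hm' : (0 : ℝ) < m := by positivity
  have hk' : (k + 1 : ℝ) ≤ m := by exact_mod_cast hk
  refine nonneg_of_mul_nonneg_left ?_ (sin_pi_div_pos hm)
  rw [chebyshevWeight_cos_mul_sin]
  apply Real.sin_nonneg_of_nonneg_of_le_pi (by positivity)
  rw [← mul_div_assoc, div_le_iff₀ hm', mul_comm]
  gcongr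

theorem chebyshevWeight_cos_pi_div_eq_zero {n : ℕ} (hn : 2 ≤ n + 1) :
    chebyshevWeight (Real.cos (Real.pi / (n + 1 : ℕ))) n = 0 := by
  refine (mul_eq_zero.mp ?_).resolve_right (sin_pi_div_pos hn).ne'
  rw [chebyshevWeight_cos_mul_sin, ← Nat.cast_succ, mul_div_cancel₀ _ (by positivity), Real.sin_pi]

end ChebyshevWeight

section PitmanWord

open CoxeterSystem

variable {V : Type*} [AddCommGroup V] [Module ℝ V] {B : Type*} {α : B → V}
  {αv : B → Module.Dual ℝ V} {π : ℝ → V}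

theorem pitman_apply (a : V) (f : Module.Dual ℝ V) (π : ℝ → V) (t : ℝ) :
    pitman a f π t = π t - runInf (fun u => f (π u)) t • a := rfl

theorem continuousOn_dual_pitman (a : V) {f g : Module.Dual ℝ V}
    (hf : ContinuousOn (fun u => f (π u)) (Set.Ici 0))
    (hg : ContinuousOn (fun u => g (π u)) (Set.Ici 0)) :
    ContinuousOn (fun u => g (pitman a f π u)) (Set.Ici 0) := by
  simp only [pitman_apply, map_sub, map_smul]
  exact hg.sub ((continuousOn_runInf hf).smul continuousOn_const)

theorem pitman_smul {c : ℝ} (hc : 0 < c) (a : V) (f : Module.Dual ℝ V) :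
    pitman (c • a) (c⁻¹ • f) = pitman a f := by
  funext π t
  simp only [pitman_apply, LinearMap.smul_apply, smul_eq_mul,
    runInf_const_mul (inv_nonneg.mpr hc.le)]
  rw [smul_smul, mul_right_comm, inv_mul_cancel₀ hc.ne', one_mul]

theorem pitmanWord_nil : pitmanWord α αv [] = id := rfl

theorem pitmanWord_cons (s : B) (l : List B) :
    pitmanWord α αv (s :: l) = pitman (α s) (αv s) ∘ pitmanWord α αv l := rfl

theorem pitmanWord_append (l l' : List B) :
    pitmanWord α αv (l ++ l') = pitmanWord α αv l ∘ pitmanWord α αv l' := by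
  induction l with
  | nil => rfl
  | cons s l ih => rw [List.cons_append, pitmanWord_cons, ih, pitmanWord_cons, Function.comp_assoc]

theorem pitmanWord_smul {c : B → ℝ} (hc : ∀ s, 0 < c s) (α : B → V) (αv : B → Module.Dual ℝ V) :
    pitmanWord (fun s => c s • α s) (fun s => (c s)⁻¹ • αv s) = pitmanWord α αv := by
  funext l
  induction l with
  | nil => rfl
  | cons s l ih => rw [pitmanWord_cons, pitmanWord_cons, pitman_smul (hc s), ih]

theorem pitmanWord_alternatingWord_succ {s t : B} {r : ℝ} (hs : αv s (α s) = 2)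
    (ht : αv t (α t) = 2) (hst : αv s (α t) = -(2 * r)) (hts : αv t (α s) = -(2 * r)) {n : ℕ}
    (hpos : ∀ k ≤ n, 0 ≤ chebyshevWeight r k)
    (hπs : ContinuousOn (fun u => αv s (π u)) (Set.Ici 0))
    (hπt : ContinuousOn (fun u => αv t (π u)) (Set.Ici 0)) (v : ℝ) :
    pitmanWord α αv (alternatingWord s t (n + 1)) π v = π v -
      nestedInf (chebyshevWeight r) (2 * ((n + 1) / 2)) (fun u => αv s (π u))
        (fun u => αv t (π u)) v • α s -
      nestedInf (chebyshevWeight r) (2 * (n / 2) + 1) (fun u => αv t (π u))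
        (fun u => αv s (π u)) v • α t := by
  induction n generalizing s t π with
  | zero =>
    simp [alternatingWord, pitmanWord_cons, pitmanWord_nil, pitman_apply, nestedInf,
      chebyshevWeight_zero]
  | succ n ih =>
    have hcoroot_s : (fun u => αv s (pitman (α t) (αv t) π u)) =
        fun u => αv s (π u) + 2 * r * runInf (fun u => αv t (π u)) u := by
      funext u
      simp only [pitman_apply, map_sub, map_smul, hst, smul_eq_mul]
      ring
    have hcoroot_t : (fun u => αv t (pitman (α t) (αv t) π u)) =
        fun u => αv t (π u) - 2 * runInf (fun u => αv t (π u)) u := by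
      funext u
      simp only [pitman_apply, map_sub, map_smul, ht, smul_eq_mul]
      ring
    rw [alternatingWord_succ, List.concat_eq_append, pitmanWord_append, Function.comp_apply,
      show pitmanWord α αv [t] π = pitman (α t) (αv t) π from rfl,
      ih ht hs hts hst (fun k hk => hpos k (by omega)) (continuousOn_dual_pitman _ hπt hπt)
        (continuousOn_dual_pitman _ hπt hπs), hcoroot_s, hcoroot_t,
      nestedInf_reflected_even (chebyshevWeight_add_two r) hπt hπs
        fun k hk => hpos k (by omega),
      nestedInf_reflected_odd (chebyshevWeight_add_two r)
        (by rw [chebyshevWeight_one, chebyshevWeight_zero, mul_one]) hπt hπs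
        fun k hk => hpos k (by omega),
      pitman_apply, chebyshevWeight_zero, show (n + 1 + 1) / 2 = n / 2 + 1 by omega, mul_add_one]
    module

theorem pitmanWord_alternatingWord_comm {s t : B} {m : ℕ} (hm : 2 ≤ m) (hs : αv s (α s) = 2)
    (ht : αv t (α t) = 2) (hst : αv s (α t) = -(2 * Real.cos (Real.pi / m)))
    (hts : αv t (α s) = -(2 * Real.cos (Real.pi / m)))
    (hπs : ContinuousOn (fun u => αv s (π u)) (Set.Ici 0))
    (hπt : ContinuousOn (fun u => αv t (π u)) (Set.Ici 0)) :
    pitmanWord α αv (alternatingWord s t m) π = pitmanWord α αv (alternatingWord t s m) π := by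
  obtain ⟨n, rfl⟩ : ∃ n, m = n + 1 := ⟨m - 1, by omega⟩
  have hpos : ∀ k ≤ n, 0 ≤ chebyshevWeight (Real.cos (Real.pi / (n + 1 : ℕ))) k :=
    fun k hk => chebyshevWeight_cos_pi_div_nonneg hm (by omega)
  have htop := nestedInf_succ_of_eq_zero (chebyshevWeight_cos_pi_div_eq_zero hm)
  funext v
  rw [pitmanWord_alternatingWord_succ hs ht hst hts hpos hπs hπt,
    pitmanWord_alternatingWord_succ ht hs hts hst hpos hπt hπs]
  rcases Nat.even_or_odd' n with ⟨i, rfl | rfl⟩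
  · rw [show (2 * i + 1) / 2 = i by omega, show 2 * i / 2 = i by omega, htop, htop]
    abel
  · rw [show (2 * i + 1 + 1) / 2 = i + 1 by omega, show (2 * i + 1) / 2 = i by omega,
      show 2 * (i + 1) = 2 * i + 1 + 1 by ring, htop, htop]
    abel

theorem exists_pos_mul_eq_neg_two_mul {x y r : ℝ} (hr : 0 ≤ r)
    (h : (r = 0 ∧ x = 0 ∧ y = 0) ∨ (x < 0 ∧ y < 0 ∧ x * y = 4 * r ^ 2)) :
    ∃ c > 0, c * x = -(2 * r) ∧ c⁻¹ * y = -(2 * r) := by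
  rcases h with ⟨rfl, rfl, rfl⟩ | ⟨hx, hy, hxy⟩
  · exact ⟨1, one_pos, by simp, by simp⟩
  · have hr' : 0 < r := hr.lt_of_ne (by rintro rfl; nlinarith [mul_pos_of_neg_of_neg hx hy])
    have hx' := hx.ne
    refine ⟨-(2 * r) / x, div_pos_of_neg_of_neg (by linarith) hx, by field_simp, ?_⟩
    field_simp
    linear_combination -hxy

/-- The numbers `α_s∨(α_t)` form a generalized Cartan matrix compatible with `M`: this is what makes
`v ↦ v - α_s∨(v) α_s` a reflection representation of the Coxeter group of `M`. When `M s t = 0`,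
i.e. `s t` has infinite order, `Real.pi / 0 = 0` and the product of the two pairings is `4`. -/
structure IsCoxeterRealization (M : CoxeterMatrix B) (α : B → V) (αv : B → Module.Dual ℝ V) :
    Prop where
  pairing_self (s : B) : αv s (α s) = 2
  pairing_of_ne (s t : B) : s ≠ t →
    (M s t = 2 ∧ αv s (α t) = 0 ∧ αv t (α s) = 0) ∨
      (αv s (α t) < 0 ∧ αv t (α s) < 0 ∧
        αv s (α t) * αv t (α s) = 4 * Real.cos (Real.pi / M s t) ^ 2)

theorem pitmanWord_braidWord {M : CoxeterMatrix B} (h : IsCoxeterRealization M α αv) {s t : B}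
    (hπs : ContinuousOn (fun u => αv s (π u)) (Set.Ici 0))
    (hπt : ContinuousOn (fun u => αv t (π u)) (Set.Ici 0)) :
    pitmanWord α αv (braidWord M s t) π = pitmanWord α αv (braidWord M t s) π := by
  classical
  rw [braidWord, braidWord, M.symmetric t s]
  rcases eq_or_ne s t with rfl | hne
  · rfl
  rcases eq_or_ne (M s t) 0 with hm₀ | hm₀
  · rw [hm₀]
    rfl
  have hm : 2 ≤ M s t := by
    have := M.off_diagonal s t hne
    omega
  have hcos : 0 ≤ Real.cos (Real.pi / M s t) :=
    Real.cos_nonneg_of_neg_pi_div_two_le_of_le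
      ((neg_nonpos.mpr (by positivity)).trans (by positivity)) (by gcongr; exact_mod_cast hm)
  obtain ⟨c, hc, hst, hts⟩ := exists_pos_mul_eq_neg_two_mul hcos
    ((h.pairing_of_ne s t hne).imp_left fun ⟨hm₂, h₀⟩ => ⟨by simp [hm₂], h₀⟩)
  have hpos (u : B) : 0 < Function.update (fun _ => (1 : ℝ)) t c u := by
    rcases eq_or_ne u t with rfl | hu <;> simp [*]
  rw [← pitmanWord_smul hpos]
  refine pitmanWord_alternatingWord_comm hm ?_ ?_ ?_ ?_ ?_ ?_
  · simp [hne, h.pairing_self]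
  · simp [h.pairing_self, hc.ne']
  · simpa [hne] using hst
  · simpa [hne] using hts
  · simpa [hne] using hπs
  · have hcπt : ContinuousOn (fun u => c⁻¹ * αv t (π u)) (Set.Ici 0) := continuousOn_const.mul hπt
    simpa using hcπt

end PitmanWord

/-! ### The geometric representation and the order of a product of simple reflections -/

section ReflectionPairs

open Polynomial.Chebyshev

variable {E : Type*} [AddCommGroup E] [Module ℝ E] {x y : E} {f g : Module.Dual ℝ E}

theorem reflection_mul_reflection_pow_apply_eq_chebyshev (hf : f x = 2) (hg : g y = 2) {c : ℝ}
    (hfy : f y = -(2 * c)) (hgx : g x = -(2 * c)) (k : ℕ) :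
    ((Module.reflection hf * Module.reflection hg) ^ k) x =
      (U ℝ (2 * k)).eval c • x + (U ℝ (2 * k - 1)).eval c • y := by
  induction k with
  | zero => simp
  | succ k ih =>
    have hx : (Module.reflection hf * Module.reflection hg) x =
        (4 * c ^ 2 - 1) • x + (2 * c) • y := by
      simp only [LinearEquiv.mul_apply, Module.reflection_apply, map_sub, map_smul, hf, hgx, hfy]
      module
    have hy : (Module.reflection hf * Module.reflection hg) y = -y - (2 * c) • x := by
      simp only [LinearEquiv.mul_apply, Module.reflection_apply, map_sub, map_smul, hg, hfy]
      module
    have hodd := congrArg (Polynomial.eval c) (U_add_two ℝ (2 * k - 1))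
    have heven := congrArg (Polynomial.eval c) (U_add_two ℝ (2 * k))
    rw [show (2 * k - 1 + 2 : ℤ) = 2 * k + 1 by ring, show (2 * k - 1 + 1 : ℤ) = 2 * k by ring]
      at hodd
    simp only [Polynomial.eval_sub, Polynomial.eval_mul, Polynomial.eval_X, Polynomial.eval_ofNat]
      at hodd heven
    rw [pow_succ', LinearEquiv.mul_apply, ih, map_add, map_smul, map_smul, hx, hy,
      show (2 * (k + 1 : ℕ) : ℤ) = 2 * k + 2 by push_cast; ring,
      show (2 * k + 2 - 1 : ℤ) = 2 * k + 1 by ring, heven, hodd]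
    module

theorem sin_add_eq_sin_and_sin_eq_zero_iff {φ θ : ℝ} (hθ : Real.sin θ ≠ 0) :
    Real.sin (φ + θ) = Real.sin θ ∧ Real.sin φ = 0 ↔ Real.cos φ = 1 := by
  rw [Real.sin_add]
  constructor
  · rintro ⟨hadd, hsin⟩
    rw [hsin, zero_mul, zero_add] at hadd
    exact mul_right_cancel₀ hθ (hadd.trans (one_mul _).symm)
  · intro hcos
    have hsin := Real.sin_eq_zero_iff_cos_eq.mpr (Or.inl hcos)
    exact ⟨by rw [hsin, hcos, zero_mul, zero_add, one_mul], hsin⟩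

theorem cos_two_mul_mul_pi_div_eq_one_iff {m : ℕ} (hm : m ≠ 0) (q : ℕ) :
    Real.cos (2 * q * (Real.pi / m)) = 1 ↔ m ∣ q := by
  have hm' : (m : ℝ) ≠ 0 := by exact_mod_cast hm
  rw [Real.cos_eq_one_iff, ← Int.natCast_dvd_natCast]
  refine exists_congr fun n => ?_
  have hpi : (n : ℝ) * (2 * Real.pi) = 2 * q * (Real.pi / m) ↔ (q : ℝ) = m * n := by
    field_simp
    exact ⟨fun h => by linarith, fun h => by linarith⟩
  rw [hpi]
  norm_cast

theorem chebyshev_cos_pi_div_eq_one_and_eq_zero_iff {m : ℕ} (hm : m ≠ 1) (q : ℕ) :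
    (U ℝ (2 * q)).eval (Real.cos (Real.pi / m)) = 1 ∧
      (U ℝ (2 * q - 1)).eval (Real.cos (Real.pi / m)) = 0 ↔ m ∣ q := by
  rcases eq_or_ne m 0 with rfl | hm₀
  · simp
  have hsin := (sin_pi_div_pos (show 2 ≤ m by omega)).ne'
  have heven : (U ℝ (2 * q)).eval (Real.cos (Real.pi / m)) = 1 ↔
      Real.sin (2 * q * (Real.pi / m) + Real.pi / m) = Real.sin (Real.pi / m) := by
    rw [← mul_left_inj' hsin, U_real_cos, one_mul]
    push_cast
    rw [add_one_mul]
  have hodd : (U ℝ (2 * q - 1)).eval (Real.cos (Real.pi / m)) = 0 ↔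
      Real.sin (2 * q * (Real.pi / m)) = 0 := by
    rw [← mul_left_inj' hsin, U_real_cos, zero_mul]
    push_cast
    rw [sub_add_cancel]
  rw [heven, hodd, sin_add_eq_sin_and_sin_eq_zero_iff hsin,
    cos_two_mul_mul_pi_div_eq_one_iff hm₀]

theorem exists_dual_sub_span_pair_eq_zero (hf : f x = 2) (hg : g y = 2) {c : ℝ}
    (hc : 1 - c ^ 2 ≠ 0) (hfy : f y = -(2 * c)) (hgx : g x = -(2 * c)) (v : E) :
    ∃ a b : ℝ, f (v - (a • x + b • y)) = 0 ∧ g (v - (a • x + b • y)) = 0 := by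
  refine ⟨(f v + c * g v) / (2 * (1 - c ^ 2)), (g v + c * f v) / (2 * (1 - c ^ 2)), ?_, ?_⟩
  · simp only [map_sub, map_add, map_smul, smul_eq_mul, hf, hfy]
    field_simp
    ring
  · simp only [map_sub, map_add, map_smul, smul_eq_mul, hg, hgx]
    field_simp
    ring

theorem reflection_mul_reflection_pow_apply_left (hf : f x = 2) (hg : g y = 2) {m : ℕ}
    (hm : m ≠ 1) (hfy : f y = -(2 * Real.cos (Real.pi / m)))
    (hgx : g x = -(2 * Real.cos (Real.pi / m))) :
    ((Module.reflection hf * Module.reflection hg) ^ m) x = x := by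
  obtain ⟨heven, hodd⟩ := (chebyshev_cos_pi_div_eq_one_and_eq_zero_iff hm m).mpr dvd_rfl
  rw [reflection_mul_reflection_pow_apply_eq_chebyshev hf hg hfy hgx, heven, hodd, one_smul,
    zero_smul, add_zero]

theorem reflection_mul_reflection_pow_eq_one (hf : f x = 2) (hg : g y = 2) {m : ℕ} (hm : m ≠ 1)
    (hfy : f y = -(2 * Real.cos (Real.pi / m))) (hgx : g x = -(2 * Real.cos (Real.pi / m))) :
    (Module.reflection hf * Module.reflection hg) ^ m = 1 := by
  rcases eq_or_ne m 0 with rfl | hm₀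
  · exact pow_zero _
  have hfix_x := reflection_mul_reflection_pow_apply_left hf hg hm hfy hgx
  have hfix_y : ((Module.reflection hf * Module.reflection hg) ^ m) y = y := by
    have hinv : Module.reflection hf * Module.reflection hg =
        (Module.reflection hg * Module.reflection hf)⁻¹ := by
      rw [mul_inv_rev, Module.reflection_inv, Module.reflection_inv]
    rw [hinv, inv_pow]
    exact (LinearEquiv.symm_apply_eq _).mpr
      (reflection_mul_reflection_pow_apply_left hg hf hm hgx hfy).symm
  have hfix_ker {v : E} (hfv : f v = 0) (hgv : g v = 0) :
      ((Module.reflection hf * Module.reflection hg) ^ m) v = v := by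
    have hv : (Module.reflection hf * Module.reflection hg) v = v := by
      simp [Module.reflection_apply, hfv, hgv]
    rw [LinearEquiv.coe_pow]
    exact Function.iterate_fixed hv m
  have hdet : 1 - Real.cos (Real.pi / m) ^ 2 ≠ 0 := by
    rw [← Real.sin_sq]
    exact pow_ne_zero 2 (sin_pi_div_pos (show 2 ≤ m by omega)).ne'
  ext v
  obtain ⟨a, b, hfv, hgv⟩ := exists_dual_sub_span_pair_eq_zero hf hg hdet hfy hgx v
  calc ((Module.reflection hf * Module.reflection hg) ^ m) v
      = ((Module.reflection hf * Module.reflection hg) ^ m)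
          ((a • x + b • y) + (v - (a • x + b • y))) := by rw [add_sub_cancel]
    _ = v := by
      rw [map_add, map_add, map_smul, map_smul, hfix_x, hfix_y, hfix_ker hfv hgv, add_sub_cancel]

end ReflectionPairs

section GeometricRepresentation

variable {B W : Type*} [Group W] {M : CoxeterMatrix B}

/-- The coroots of the geometric representation of a Coxeter group, on the space with basis the
simple roots: `v ↦ 2 B(v, e_s)` for the bilinear form `B(e_s, e_t) = -cos (π / M s t)`. -/
noncomputable def geometricCoroot (M : CoxeterMatrix B) (s : B) : Module.Dual ℝ (B →₀ ℝ) :=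
  Finsupp.linearCombination ℝ fun t => -(2 * Real.cos (Real.pi / M s t))

theorem geometricCoroot_single (s t : B) :
    geometricCoroot M s (Finsupp.single t 1) = -(2 * Real.cos (Real.pi / M s t)) := by
  simp [geometricCoroot]

theorem geometricCoroot_single_self (M : CoxeterMatrix B) (s : B) :
    geometricCoroot M s (Finsupp.single s 1) = 2 := by
  simp [geometricCoroot]

theorem isLiftable_geometricReflection (M : CoxeterMatrix B) :
    M.IsLiftable fun s => Module.reflection (geometricCoroot_single_self M s) := by
  intro s t
  rcases eq_or_ne s t with rfl | hst
  · rw [M.diagonal, pow_one]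
    ext1 v
    exact Module.involutive_reflection (geometricCoroot_single_self M s) v
  · refine reflection_mul_reflection_pow_eq_one _ _ (M.off_diagonal s t hst)
      (geometricCoroot_single s t) ?_
    rw [geometricCoroot_single, M.symmetric]

theorem orderOf_simple_mul_simple (cs : CoxeterSystem M W) (s t : B) :
    orderOf (cs.simple s * cs.simple t) = M s t := by
  rcases eq_or_ne s t with rfl | hst
  · rw [cs.simple_mul_simple_self, orderOf_one, M.diagonal]
  refine Nat.dvd_antisymm (orderOf_dvd_of_pow_eq_one (cs.simple_mul_simple_pow s t)) ?_
  set q := orderOf (cs.simple s * cs.simple t) with hq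
  have hpow := congrArg (cs.lift ⟨_, isLiftable_geometricReflection M⟩)
    (pow_orderOf_eq_one (cs.simple s * cs.simple t))
  rw [map_pow, map_mul, map_one, cs.lift_apply_simple, cs.lift_apply_simple, ← hq] at hpow
  have hfix := LinearEquiv.congr_fun hpow (Finsupp.single s 1)
  rw [reflection_mul_reflection_pow_apply_eq_chebyshev _ _ (geometricCoroot_single s t)
    (by rw [geometricCoroot_single, M.symmetric])] at hfix
  rw [← chebyshev_cos_pi_div_eq_one_and_eq_zero_iff (M.off_diagonal s t hst)]
  constructor
  · simpa [hst] using DFunLike.congr_fun hfix s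
  · simpa [hst] using DFunLike.congr_fun hfix t

end GeometricRepresentation

/-! ### The exchange property and Matsumoto's theorem -/

section Exchange

open CoxeterSystem

variable {B W : Type*} [Group W] {M : CoxeterMatrix B} (cs : CoxeterSystem M W)

theorem prod_map_alternatingWord_two_mul {G : Type*} [Monoid G] (f : B → G) (i j : B) (m : ℕ) :
    ((alternatingWord i j (2 * m)).map f).prod = (f i * f j) ^ m := by
  induction m with
  | zero => simp [alternatingWord]
  | succ m ih =>
    rw [mul_add_one, alternatingWord_succ, alternatingWord_succ, pow_succ, ← ih]
    simp

theorem rightInvSeq_alternatingWord (i j : B) (k : ℕ) :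
    cs.rightInvSeq (alternatingWord i j k) =
      ((List.range k).map fun p => cs.simple j * (cs.simple i * cs.simple j) ^ p).reverse := by
  induction k generalizing i j with
  | zero => simp [alternatingWord]
  | succ k ih =>
    have hconj (p : ℕ) :
        cs.simple j * (cs.simple i * (cs.simple j * cs.simple i) ^ p) * cs.simple j =
          cs.simple j * (cs.simple i * cs.simple j) ^ (p + 1) := by
      rw [← mul_pow_mul, pow_succ]
      simp only [mul_assoc]
    rw [alternatingWord_succ, rightInvSeq_concat, ih, List.range_succ_eq_map]
    simp [Function.comp_def, hconj]

open Classical in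
theorem even_count_rightInvSeq_alternatingWord (i j : B) (t : W) :
    Even ((cs.rightInvSeq (alternatingWord i j (2 * M i j))).count t) := by
  rw [rightInvSeq_alternatingWord, List.count_reverse, two_mul, List.range_add, List.map_append,
    List.count_append, List.map_map]
  simp [Function.comp_def, pow_add]

open Classical in
/-- The action of a simple reflection on pairs of a group element and a sign: conjugation on the
first component, with a sign change at the simple reflection itself. Composing along a word counts
modulo `2` how often an element occurs in the right inversion sequence of the word. -/
noncomputable def signedConj (s : B) : Function.End (W × ZMod 2) := fun p =>
  (cs.simple s * p.1 * (cs.simple s)⁻¹, p.2 + if p.1 = cs.simple s then 1 else 0)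

open Classical in
theorem prod_map_signedConj_apply (ω : List B) (t : W) (e : ZMod 2) :
    (ω.map (signedConj cs)).prod (t, e) =
      (cs.wordProd ω * t * (cs.wordProd ω)⁻¹, e + (cs.rightInvSeq ω).count t) := by
  induction ω with
  | nil => simp; rfl
  | cons i ω ih =>
    have hiff : cs.wordProd ω * t * (cs.wordProd ω)⁻¹ = cs.simple i ↔
        (cs.wordProd ω)⁻¹ * cs.simple i * cs.wordProd ω = t := by
      rw [mul_inv_eq_iff_eq_mul, mul_assoc, inv_mul_eq_iff_eq_mul, eq_comm]
    rw [List.map_cons, List.prod_cons]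
    change signedConj cs i ((ω.map (signedConj cs)).prod (t, e)) = _
    rw [ih]
    simp only [signedConj, hiff, cs.wordProd_cons, rightInvSeq, List.count_cons, beq_iff_eq]
    refine Prod.ext (by group) ?_
    push_cast
    ring

theorem isLiftable_signedConj : M.IsLiftable (signedConj cs) := by
  classical
  intro i j
  funext ⟨t, e⟩
  have hprod : cs.wordProd (alternatingWord i j (2 * M i j)) = 1 := by
    rw [wordProd, prod_map_alternatingWord_two_mul, cs.simple_mul_simple_pow]
  have hcount := ZMod.natCast_eq_zero_iff_even.mpr
    (even_count_rightInvSeq_alternatingWord cs i j t)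
  rw [← prod_map_alternatingWord_two_mul, prod_map_signedConj_apply, hprod, hcount]
  simp
  rfl

open Classical in
theorem natCast_count_rightInvSeq_congr {ω ω' : List B} (h : cs.wordProd ω = cs.wordProd ω')
    (t : W) : ((cs.rightInvSeq ω).count t : ZMod 2) = (cs.rightInvSeq ω').count t := by
  have hlift (υ : List B) : cs.lift ⟨_, isLiftable_signedConj cs⟩ (cs.wordProd υ) =
      (υ.map (signedConj cs)).prod := by
    rw [wordProd, map_list_prod, List.map_map]
    congr 2
    funext i
    exact cs.lift_apply_simple _ i
  have hprod : (ω.map (signedConj cs)).prod = (ω'.map (signedConj cs)).prod := by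
    rw [← hlift, ← hlift, h]
  simpa [prod_map_signedConj_apply] using
    congrArg (fun φ : Function.End (W × ZMod 2) => (φ (t, 0)).2) hprod

variable {cs}

theorem exists_isReduced_concat_of_isRightDescent {w : W} {s : B} (h : cs.IsRightDescent w s) :
    ∃ ω, cs.IsReduced (ω ++ [s]) ∧ cs.wordProd (ω ++ [s]) = w := by
  obtain ⟨ω, hω, hw⟩ := cs.exists_isReduced (w * cs.simple s)
  have hprod : cs.wordProd (ω ++ [s]) = w := by
    rw [wordProd_append, wordProd_singleton, ← hw, simple_mul_simple_cancel_right]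
  refine ⟨ω, ?_, hprod⟩
  rw [CoxeterSystem.IsReduced, hprod, ← cs.isRightDescent_iff.mp h, hw, hω.eq, List.length_append,
    List.length_singleton]

theorem exists_isReduced_cons_of_isLeftDescent {w : W} {s : B} (h : cs.IsLeftDescent w s) :
    ∃ ω, cs.IsReduced (s :: ω) ∧ cs.wordProd (s :: ω) = w := by
  obtain ⟨ω, hω, hw⟩ :=
    exists_isReduced_concat_of_isRightDescent (cs.isRightDescent_inv_iff.mpr h)
  have hcons : s :: ω.reverse = (ω ++ [s]).reverse := by simp
  refine ⟨ω.reverse, ?_, ?_⟩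
  · rwa [hcons, cs.isReduced_reverse_iff]
  · rw [hcons, cs.wordProd_reverse, hw, inv_inv]

theorem isRightDescent_of_isReduced_concat {ω : List B} {s : B} (h : cs.IsReduced (ω ++ [s])) :
    cs.IsRightDescent (cs.wordProd (ω ++ [s])) s := by
  rw [IsRightDescent, h.eq, wordProd_append, wordProd_singleton, simple_mul_simple_cancel_right,
    List.length_append, List.length_singleton]
  exact Nat.lt_succ_of_le (cs.length_wordProd_le ω)

theorem simple_mem_rightInvSeq_of_isRightDescent {ω : List B} {s : B}
    (h : cs.IsRightDescent (cs.wordProd ω) s) : cs.simple s ∈ cs.rightInvSeq ω := by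
  classical
  obtain ⟨υ, hυ, hprod⟩ := exists_isReduced_concat_of_isRightDescent h
  have hone : (cs.rightInvSeq (υ ++ [s])).count (cs.simple s) = 1 :=
    List.count_eq_one_of_mem hυ.nodup_rightInvSeq
      (by rw [← List.concat_eq_append, rightInvSeq_concat, List.concat_eq_append]; simp)
  have hparity := natCast_count_rightInvSeq_congr cs hprod (cs.simple s)
  rw [hone] at hparity
  by_contra hmem
  rw [List.count_eq_zero_of_not_mem hmem] at hparity
  simp at hparity

theorem simple_notMem_rightInvSeq_alternatingWord {s t : B} {k : ℕ}
    (hk : k < M s t ∨ M s t = 0) : cs.simple t ∉ cs.rightInvSeq (alternatingWord t s k) := by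
  rw [rightInvSeq_alternatingWord, List.mem_reverse, List.mem_map]
  rintro ⟨p, hp, hpt⟩
  have hpow : (cs.simple s * cs.simple t) ^ (p + 1) = 1 := by
    rw [pow_succ, ← mul_assoc, mul_pow_mul, hpt, simple_mul_simple_self]
  have hdvd := orderOf_dvd_of_pow_eq_one hpow
  rw [orderOf_simple_mul_simple] at hdvd
  have hp' := List.mem_range.mp hp
  rcases hk with hk | hk
  · have := Nat.le_of_dvd p.succ_pos hdvd
    omega
  · simp [hk] at hdvd

theorem exists_isReduced_append_alternatingWord {w : W} {s t : B} {k : ℕ}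
    (hs : cs.IsRightDescent w s) (ht : cs.IsRightDescent w t) (hk : k ≤ M s t ∨ M s t = 0) :
    ∃ υ, cs.IsReduced (υ ++ alternatingWord s t k) ∧
      cs.wordProd (υ ++ alternatingWord s t k) = w := by
  induction k generalizing s t with
  | zero =>
    obtain ⟨υ, hυ, hw⟩ := cs.exists_isReduced w
    exact ⟨υ, by simpa [alternatingWord] using hυ, by simpa [alternatingWord] using hw.symm⟩
  | succ k ih =>
    obtain ⟨υ, hred, rfl⟩ := ih ht hs (by rw [M.symmetric t s]; omega)
    obtain ⟨j, hj, hjt⟩ := List.mem_iff_getElem.mp (simple_mem_rightInvSeq_of_isRightDescent ht)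
    have hjυ : j < υ.length := by
      by_contra! hle
      refine simple_notMem_rightInvSeq_alternatingWord (cs := cs) (s := s) (t := t) (k := k)
        (by omega) ?_
      rw [← List.drop_left (l₁ := υ) (l₂ := alternatingWord t s k), rightInvSeq_drop, ← hjt,
        List.mem_drop_iff_getElem]
      exact ⟨j - υ.length, by omega, by congr 1; omega⟩
    have herase := cs.wordProd_mul_getD_rightInvSeq (υ ++ alternatingWord t s k) j
    rw [List.getD_eq_getElem _ _ hj, hjt, List.eraseIdx_append_of_lt_length hjυ] at herase
    have hprod : cs.wordProd (υ.eraseIdx j ++ alternatingWord s t (k + 1)) =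
        cs.wordProd (υ ++ alternatingWord t s k) := by
      rw [alternatingWord_succ, List.concat_eq_append, ← List.append_assoc, wordProd_append,
        wordProd_singleton, ← herase, simple_mul_simple_cancel_right]
    refine ⟨υ.eraseIdx j, ?_, hprod⟩
    rw [CoxeterSystem.IsReduced, hprod, hred.eq]
    simp only [List.length_append, length_alternatingWord, List.length_eraseIdx, if_pos hjυ]
    omega

end Exchange

section Matsumoto

open CoxeterSystem Relation

variable {B W : Type*} [Group W] {M : CoxeterMatrix B} {cs : CoxeterSystem M W}

/-- Two words are related by a braid move if one is obtained from the other by replacing an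
alternating factor `⋯ s t` of length `M s t` by the alternating factor `⋯ t s` of the same length.
When `M s t = 0`, i.e. `s t` has infinite order, the factor is empty and nothing changes. -/
def BraidMove (M : CoxeterMatrix B) (ω ω' : List B) : Prop :=
  ∃ u v s t, ω = u ++ braidWord M s t ++ v ∧ ω' = u ++ braidWord M t s ++ v

theorem BraidMove.append_right {ω ω' : List B} (h : BraidMove M ω ω') (υ : List B) :
    BraidMove M (ω ++ υ) (ω' ++ υ) := by
  obtain ⟨u, v, s, t, rfl, rfl⟩ := h
  exact ⟨u, v ++ υ, s, t, by simp only [List.append_assoc], by simp only [List.append_assoc]⟩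

theorem BraidMove.wordProd_eq {ω ω' : List B} (h : BraidMove M ω ω') :
    cs.wordProd ω = cs.wordProd ω' := by
  obtain ⟨u, v, s, t, rfl, rfl⟩ := h
  simp only [wordProd_append, cs.wordProd_braidWord_eq s t]

theorem BraidMove.length_eq {ω ω' : List B} (h : BraidMove M ω ω') : ω.length = ω'.length := by
  obtain ⟨u, v, s, t, rfl, rfl⟩ := h
  simp only [List.length_append, braidWord, length_alternatingWord, M.symmetric s t]

theorem BraidMove.isReduced {ω ω' : List B} (h : BraidMove M ω ω') (hω : cs.IsReduced ω) :
    cs.IsReduced ω' := by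
  rw [CoxeterSystem.IsReduced, ← h.wordProd_eq, ← h.length_eq, hω.eq]

theorem coxeterMatrix_ne_zero_of_isRightDescent {w : W} {s t : B} (hs : cs.IsRightDescent w s)
    (ht : cs.IsRightDescent w t) : M s t ≠ 0 := by
  intro hst
  obtain ⟨υ, hυ, hprod⟩ := exists_isReduced_append_alternatingWord
    (k := cs.length w + 1) hs ht (Or.inr hst)
  have hlength := hυ.eq
  rw [hprod, List.length_append, length_alternatingWord] at hlength
  omega

theorem exists_braidWord_eq_concat {s t : B} (h : M s t ≠ 0) : ∃ u, braidWord M s t = u ++ [t] := by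
  obtain ⟨m, hm⟩ := Nat.exists_eq_succ_of_ne_zero h
  exact ⟨alternatingWord t s m, by
    rw [braidWord, hm, alternatingWord_succ, List.concat_eq_append]⟩

theorem exists_braidMove_of_isRightDescent {w : W} {s t : B} (hs : cs.IsRightDescent w s)
    (ht : cs.IsRightDescent w t) :
    ∃ u u', BraidMove M (u ++ [s]) (u' ++ [t]) ∧ cs.IsReduced (u ++ [s]) ∧
      cs.wordProd (u ++ [s]) = w := by
  have hst := coxeterMatrix_ne_zero_of_isRightDescent hs ht
  obtain ⟨u, hu⟩ := exists_braidWord_eq_concat (M.symmetric s t ▸ hst)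
  obtain ⟨u', hu'⟩ := exists_braidWord_eq_concat hst
  obtain ⟨υ, hυ, hprod⟩ :=
    exists_isReduced_append_alternatingWord ht hs (Or.inl (le_refl (M t s)))
  rw [← braidWord, hu, ← List.append_assoc] at hυ hprod
  exact ⟨υ ++ u, υ ++ u', ⟨υ, [], t, s, by simp [hu], by simp [hu']⟩, hυ, hprod⟩

theorem reflTransGen_braidMove_append_right {ω ω' : List B} (h : ReflTransGen (BraidMove M) ω ω')
    (υ : List B) : ReflTransGen (BraidMove M) (ω ++ υ) (ω' ++ υ) := by
  induction h with
  | refl => exact .refl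
  | tail _ hmove ih => exact ih.tail (hmove.append_right υ)

/-- **Matsumoto's theorem**, by induction on the length: reduced words with the same last letter are
connected by the induction hypothesis. If the last letters are `s` and `t`, both are right descents,
so the element also has a reduced word ending in a full alternating factor, and one braid move
changes its last letter from `s` to `t`. -/
theorem reflTransGen_braidMove_of_isReduced {ω ω' : List B} (hω : cs.IsReduced ω)
    (hω' : cs.IsReduced ω') (h : cs.wordProd ω = cs.wordProd ω') :
    ReflTransGen (BraidMove M) ω ω' := by
  induction hn : cs.length (cs.wordProd ω) generalizing ω ω' with
  | zero =>
    rw [List.length_eq_zero_iff.mp (hω.eq.symm.trans hn),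
      List.length_eq_zero_iff.mp (hω'.eq.symm.trans (h ▸ hn))]
  | succ n ih =>
    have same_last {υ υ' : List B} {s : B} (hυ : cs.IsReduced (υ ++ [s]))
        (hυ' : cs.IsReduced (υ' ++ [s])) (hυω : cs.wordProd (υ ++ [s]) = cs.wordProd ω)
        (hυ'ω : cs.wordProd (υ' ++ [s]) = cs.wordProd ω) :
        ReflTransGen (BraidMove M) (υ ++ [s]) (υ' ++ [s]) := by
      have hυ_init : cs.IsReduced υ := by simpa using hυ.take υ.length
      have hυ'_init : cs.IsReduced υ' := by simpa using hυ'.take υ'.length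
      have hprod := hυω.trans hυ'ω.symm
      rw [wordProd_append, wordProd_append, mul_left_inj] at hprod
      refine reflTransGen_braidMove_append_right (ih hυ_init hυ'_init hprod ?_) [s]
      rw [← hυω, hυ.eq, List.length_append, List.length_singleton, ← hυ_init.eq] at hn
      exact Nat.succ_injective hn
    have hne : ω ≠ [] := by rintro rfl; simp at hn
    have hne' : ω' ≠ [] := by rintro rfl; simp [h] at hn
    obtain ⟨υ, s, rfl⟩ := (List.eq_nil_or_concat' ω).resolve_left hne
    obtain ⟨υ', t, rfl⟩ := (List.eq_nil_or_concat' ω').resolve_left hne'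
    obtain ⟨u, u', hmove, hu, hprod⟩ := exists_braidMove_of_isRightDescent
      (isRightDescent_of_isReduced_concat hω) (h ▸ isRightDescent_of_isReduced_concat hω')
    exact (same_last hω hu rfl hprod).trans <| .head hmove <|
      same_last (hmove.isReduced hu) hω' (hmove.wordProd_eq.symm.trans hprod) h.symm

end Matsumoto

/-! ### Pitman transforms along reduced words -/

section ReducedWord

open CoxeterSystem Relation

variable {V : Type*} [AddCommGroup V] [Module ℝ V] {B : Type*} {α : B → V}
  {αv : B → Module.Dual ℝ V} {π π' : ℝ → V}

theorem pitman_nonneg {a : V} {f : Module.Dual ℝ V} (ha : f a = 2)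
    (hf : ContinuousOn (fun u => f (π u)) (Set.Ici 0)) (h₀ : f (π 0) = 0) {t : ℝ} (ht : 0 ≤ t) :
    0 ≤ f (pitman a f π t) := by
  rw [pitman_apply, map_sub, map_smul, ha, smul_eq_mul]
  linarith [runInf_le hf ht le_rfl, runInf_le hf le_rfl ht]

theorem pitman_eq_self (a : V) {f : Module.Dual ℝ V} (h₀ : f (π 0) = 0)
    (h : ∀ t, 0 ≤ t → 0 ≤ f (π t)) : pitman a f π = π := by
  funext t
  rw [pitman_apply, runInf_eq_zero h₀ h, zero_smul, sub_zero]

theorem pitmanWord_eqOn_Icc {T : ℝ} (h : Set.EqOn π π' (Set.Icc 0 T)) (l : List B) :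
    Set.EqOn (pitmanWord α αv l π) (pitmanWord α αv l π') (Set.Icc 0 T) := by
  induction l with
  | nil => exact h
  | cons s l ih =>
    intro t ht
    rw [pitmanWord_cons, Function.comp_apply, Function.comp_apply, pitman_apply, pitman_apply,
      ih ht, runInf_congr fun u hu => congrArg (αv s) (ih ⟨hu.1, hu.2.trans ht.2⟩)]

/-- Paths on which the Pitman transforms along words in `B` are well behaved: all coordinates
`αv s` are continuous on the half-line and start at `0`. No topology on `V` is involved, and the
values at negative times are irrelevant. -/
structure IsCorootPath (αv : B → Module.Dual ℝ V) (π : ℝ → V) : Prop where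
  continuousOn (s : B) : ContinuousOn (fun u => αv s (π u)) (Set.Ici 0)
  map_zero (s : B) : αv s (π 0) = 0

theorem isCorootPath_stopped {T : ℝ} (hT : 0 ≤ T)
    (hπ : ∀ s, ContinuousOn (fun u => αv s (π u)) (Set.Icc 0 T)) (h₀ : ∀ s, αv s (π 0) = 0) :
    IsCorootPath αv fun t => π (min t T) where
  continuousOn s := (hπ s).comp (by fun_prop) fun _ ht => ⟨le_min ht hT, min_le_right _ _⟩
  map_zero s := by rw [min_eq_left hT, h₀]

theorem isCorootPath_pitman (hπ : IsCorootPath αv π) (a : V) (s : B) :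
    IsCorootPath αv (pitman a (αv s) π) where
  continuousOn t := continuousOn_dual_pitman a (hπ.continuousOn s) (hπ.continuousOn t)
  map_zero t := by
    rw [pitman_apply, runInf_apply_zero, hπ.map_zero, zero_smul, sub_zero, hπ.map_zero]

theorem isCorootPath_pitmanWord (hπ : IsCorootPath αv π) (l : List B) :
    IsCorootPath αv (pitmanWord α αv l π) := by
  induction l with
  | nil => exact hπ
  | cons s l ih => exact isCorootPath_pitman ih (α s) s

theorem pitmanWord_eq_self (h₀ : ∀ s, αv s (π 0) = 0) (h : ∀ s t, 0 ≤ t → 0 ≤ αv s (π t))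
    (l : List B) : pitmanWord α αv l π = π := by
  induction l with
  | nil => rfl
  | cons s l ih =>
    rw [pitmanWord_cons, Function.comp_apply, ih, pitman_eq_self _ (h₀ s) (h s)]

variable {W : Type*} [Group W] {M : CoxeterMatrix B} {cs : CoxeterSystem M W}

theorem pitmanWord_eq_of_braidMove (h : IsCoxeterRealization M α αv) (hπ : IsCorootPath αv π)
    {l l' : List B} (hl : BraidMove M l l') : pitmanWord α αv l π = pitmanWord α αv l' π := by
  obtain ⟨u, v, s, t, rfl, rfl⟩ := hl
  have hv := isCorootPath_pitmanWord (α := α) hπ v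
  simp only [pitmanWord_append, Function.comp_apply]
  rw [pitmanWord_braidWord h (hv.continuousOn s) (hv.continuousOn t)]

theorem pitmanWord_eq_of_isReduced (h : IsCoxeterRealization M α αv) (hπ : IsCorootPath αv π)
    {l l' : List B} (hl : cs.IsReduced l) (hl' : cs.IsReduced l')
    (hprod : cs.wordProd l = cs.wordProd l') : pitmanWord α αv l π = pitmanWord α αv l' π := by
  have of_moves {ω : List B} (hω : ReflTransGen (BraidMove M) l ω) :
      pitmanWord α αv l π = pitmanWord α αv ω π := by
    induction hω with
    | refl => rfl
    | tail _ hmove ih => exact ih.trans (pitmanWord_eq_of_braidMove h hπ hmove)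
  exact of_moves (reflTransGen_braidMove_of_isReduced hl hl' hprod)

theorem pitmanWord_nonneg_of_isLeftDescent (h : IsCoxeterRealization M α αv)
    (hπ : IsCorootPath αv π) {l : List B} (hl : cs.IsReduced l) {s : B}
    (hs : cs.IsLeftDescent (cs.wordProd l) s) {t : ℝ} (ht : 0 ≤ t) :
    0 ≤ αv s (pitmanWord α αv l π t) := by
  obtain ⟨ω, hω, hprod⟩ := exists_isReduced_cons_of_isLeftDescent hs
  have hωπ := isCorootPath_pitmanWord (α := α) hπ ω
  rw [pitmanWord_eq_of_isReduced h hπ hl hω hprod.symm]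
  exact pitman_nonneg (h.pairing_self s) (hωπ.continuousOn s) (hωπ.map_zero s) ht

theorem pitmanWord_pitman_of_isRightDescent (h : IsCoxeterRealization M α αv)
    (hπ : IsCorootPath αv π) {l : List B} (hl : cs.IsReduced l) {s : B}
    (hs : cs.IsRightDescent (cs.wordProd l) s) :
    pitmanWord α αv l (pitman (α s) (αv s) π) = pitmanWord α αv l π := by
  obtain ⟨ω, hω, hprod⟩ := exists_isReduced_concat_of_isRightDescent hs
  have hsπ := isCorootPath_pitman hπ (α s) s
  have hidem : pitman (α s) (αv s) (pitman (α s) (αv s) π) = pitman (α s) (αv s) π :=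
    pitman_eq_self _ (hsπ.map_zero s) fun _ =>
      pitman_nonneg (h.pairing_self s) (hπ.continuousOn s) (hπ.map_zero s)
  rw [pitmanWord_eq_of_isReduced h hsπ hl hω hprod.symm,
    pitmanWord_eq_of_isReduced h hπ hl hω hprod.symm, pitmanWord_append, Function.comp_apply,
    Function.comp_apply, pitmanWord_cons, pitmanWord_nil, Function.comp_id, hidem]

end ReducedWord

section LongestElement

open CoxeterSystem

variable {V : Type*} [AddCommGroup V] [Module ℝ V] {B : Type*} {α : B → V}
  {αv : B → Module.Dual ℝ V} {π : ℝ → V} {W : Type*} [Group W] {M : CoxeterMatrix B}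
  {cs : CoxeterSystem M W} {l₀ : List B}

theorem isLeftDescent_of_forall_length_le {w₀ : W} (hw₀ : ∀ w, cs.length w ≤ cs.length w₀)
    (s : B) : cs.IsLeftDescent w₀ s :=
  (hw₀ _).lt_of_ne (cs.length_simple_mul_ne w₀ s)

theorem isRightDescent_of_forall_length_le {w₀ : W} (hw₀ : ∀ w, cs.length w ≤ cs.length w₀)
    (s : B) : cs.IsRightDescent w₀ s :=
  (hw₀ _).lt_of_ne (cs.length_mul_simple_ne w₀ s)

theorem pitmanWord_longest_nonneg (h : IsCoxeterRealization M α αv) (hl₀ : cs.IsReduced l₀)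
    (hmax : ∀ w, cs.length w ≤ cs.length (cs.wordProd l₀)) (hπ : IsCorootPath αv π) (s : B)
    {t : ℝ} (ht : 0 ≤ t) : 0 ≤ αv s (pitmanWord α αv l₀ π t) :=
  pitmanWord_nonneg_of_isLeftDescent h hπ hl₀ (isLeftDescent_of_forall_length_le hmax s) ht

theorem pitmanWord_pitmanWord_longest (h : IsCoxeterRealization M α αv) (hl₀ : cs.IsReduced l₀)
    (hmax : ∀ w, cs.length w ≤ cs.length (cs.wordProd l₀)) (hπ : IsCorootPath αv π)
    (l : List B) : pitmanWord α αv l (pitmanWord α αv l₀ π) = pitmanWord α αv l₀ π :=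
  pitmanWord_eq_self (isCorootPath_pitmanWord hπ l₀).map_zero
    (fun s _ => pitmanWord_longest_nonneg h hl₀ hmax hπ s) l

theorem pitmanWord_longest_pitmanWord (h : IsCoxeterRealization M α αv) (hl₀ : cs.IsReduced l₀)
    (hmax : ∀ w, cs.length w ≤ cs.length (cs.wordProd l₀)) (hπ : IsCorootPath αv π)
    (l : List B) : pitmanWord α αv l₀ (pitmanWord α αv l π) = pitmanWord α αv l₀ π := by
  induction l with
  | nil => rfl
  | cons s l ih =>
    rw [pitmanWord_cons, Function.comp_apply, pitmanWord_pitman_of_isRightDescent h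
      (isCorootPath_pitmanWord hπ l) hl₀ (isRightDescent_of_forall_length_le hmax s), ih]

theorem pitmanWord_longest_element_general (h : IsCoxeterRealization M α αv)
    (hl₀ : cs.IsReduced l₀) (hmax : ∀ w, cs.length w ≤ cs.length (cs.wordProd l₀)) {T : ℝ}
    (hT : 0 ≤ T) (hπ : ∀ s, ContinuousOn (fun u => αv s (π u)) (Set.Icc 0 T))
    (h₀ : ∀ s, αv s (π 0) = 0) :
    (∀ t ∈ Set.Icc 0 T, ∀ s, 0 ≤ αv s (pitmanWord α αv l₀ π t)) ∧
    (∀ l, Set.EqOn (pitmanWord α αv l (pitmanWord α αv l₀ π)) (pitmanWord α αv l₀ π)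
      (Set.Icc 0 T)) ∧
    (∀ l, Set.EqOn (pitmanWord α αv l₀ (pitmanWord α αv l π)) (pitmanWord α αv l₀ π)
      (Set.Icc 0 T)) := by
  have hagree : Set.EqOn π (fun t => π (min t T)) (Set.Icc 0 T) := fun t ht => by
    simp only [min_eq_left ht.2]
  have hσ := isCorootPath_stopped hT hπ h₀
  have hagree_word := pitmanWord_eqOn_Icc (α := α) (αv := αv) hagree
  refine ⟨fun t ht s => ?_, fun l => ?_, fun l => ?_⟩
  · rw [hagree_word l₀ ht]
    exact pitmanWord_longest_nonneg h hl₀ hmax hσ s ht.1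
  · refine ((pitmanWord_eqOn_Icc (hagree_word l₀) l).trans ?_).trans (hagree_word l₀).symm
    rw [pitmanWord_pitmanWord_longest h hl₀ hmax hσ l]
    exact Set.eqOn_refl _ _
  · refine ((pitmanWord_eqOn_Icc (hagree_word l) l₀).trans ?_).trans (hagree_word l₀).symm
    rw [pitmanWord_longest_pitmanWord h hl₀ hmax hσ l]
    exact Set.eqOn_refl _ _

end LongestElement

/-- Corollary 2.8 of Biane–Bougerol–O'Connell.  If `W` is finite with longest element
`w₀`, then (a) `P_{w₀} π` takes values in the closed Weyl chamber
`C̄ = {v : α_s∨(v) ≥ 0 for all s}`; (b) `P_{w₀}` is an idempotent;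
(c) `P_w ∘ P_{w₀} = P_{w₀} ∘ P_w = P_{w₀}` for every `w ∈ W`.  Here `P_{w₀}` and `P_w`
are computed along arbitrary reduced words `l₀` and `l`. -/
theorem pitmanWord_longest_element
    {V : Type*} [NormedAddCommGroup V] [NormedSpace ℝ V] [FiniteDimensional ℝ V]
    (T : ℝ) (hT : 0 < T)
    {B : Type*} [Fintype B] {W : Type*} [Group W] [Finite W]
    (M : CoxeterMatrix B) (cs : CoxeterSystem M W)
    (α : B → V) (αv : B → Module.Dual ℝ V)
    (hpair : ∀ s, αv s (α s) = 2)
    (ρ : W →* (V ≃ₗ[ℝ] V)) (hρinj : Function.Injective ρ)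
    (hρs : ∀ s v, ρ (cs.simple s) v = v - αv s v • α s)
    (hM : ∀ s s' : B, s ≠ s' →
      (M s s' = 2 ∧ αv s (α s') = 0 ∧ αv s' (α s) = 0) ∨
      (αv s (α s') < 0 ∧ αv s' (α s) < 0 ∧
        αv s (α s') * αv s' (α s) = 4 * Real.cos (Real.pi / (M s s' : ℝ)) ^ 2))
    (w₀ : W) (hw₀ : ∀ w : W, cs.length w ≤ cs.length w₀)
    (l₀ : List B) (hl₀ : cs.wordProd l₀ = w₀) (hl₀red : cs.IsReduced l₀)
    (w : W) (l : List B) (hl : cs.wordProd l = w) (hlred : cs.IsReduced l)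
    (π : ℝ → V) (hcont : ContinuousOn π (Set.Icc 0 T)) (h0 : π 0 = 0) :
    (∀ t ∈ Set.Icc 0 T, ∀ s : B, 0 ≤ αv s (pitmanWord α αv l₀ π t)) ∧
    (∀ t ∈ Set.Icc 0 T,
      pitmanWord α αv l₀ (pitmanWord α αv l₀ π) t = pitmanWord α αv l₀ π t) ∧
    (∀ t ∈ Set.Icc 0 T,
      pitmanWord α αv l (pitmanWord α αv l₀ π) t = pitmanWord α αv l₀ π t) ∧
    (∀ t ∈ Set.Icc 0 T,
      pitmanWord α αv l₀ (pitmanWord α αv l π) t = pitmanWord α αv l₀ π t) := by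
  have h : IsCoxeterRealization M α αv := ⟨hpair, hM⟩
  have hcoroot (s : B) : ContinuousOn (fun u => αv s (π u)) (Set.Icc 0 T) :=
    (αv s).continuous_of_finiteDimensional.comp_continuousOn hcont
  obtain ⟨hnonneg, hleft, hright⟩ := pitmanWord_longest_element_general h hl₀red
    (hl₀ ▸ hw₀) hT.le hcoroot fun s => by rw [h0, map_zero]
  exact ⟨hnonneg, hleft l₀, hleft l, hright l⟩
end

section
/- Let V be a finite-dimensional real vector space with dual V∨, T > 0, and let α ∈ V, α∨ ∈ V∨ satisfy α∨(α) = 2. On continuous paths π : [0,T] → V with π(0) = 0 one has the identities: (a) E_α ∘ E_α = E_α; (b) E_α ∘ P_α = E_α; (c) P_α ∘ E_α = P_α; (d) for every such path π, (E_α π)(T) = s_α( (P_α π)(T) ). -/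
/-- The co-Pitman transform `E_α = κ ∘ P_α ∘ κ` on paths on `[0,T]`:
`E_α π (t) = π t − (inf_{t ≤ s ≤ T} α∨(π s)) • α + (inf_{0 ≤ s ≤ T} α∨(π s)) • α`. -/
noncomputable def copitman {V : Type*} [AddCommGroup V] [Module ℝ V]
    (T : ℝ) (α : V) (αv : Module.Dual ℝ V) (π : ℝ → V) : ℝ → V :=
  fun t => π t - sInf ((fun s => αv (π s)) '' Set.Icc t T) • α
            + sInf ((fun s => αv (π s)) '' Set.Icc 0 T) • α

/-!
Write `f = α∨ ∘ π`, `L = inf_{[0,t]} f`, `R = inf_{[t,T]} f` and `I = inf_{[0,T]} f = min L R`.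
Since `α∨(α) = 2`, applying `α∨` to `P_α π` and `E_α π` gives `f(s) - 2 inf_{[0,s]} f` and
`f(s) - 2 inf_{[s,T]} f + 2 I`, so each identity reduces to computing an infimum of one of these
functions. On `[t,T]`, `f(s) - 2 inf_{[s,T]} f` has minimum `-f(T)`, whatever `t` is, which gives
(a). On `[t,T]`, `f(s) - 2 inf_{[0,s]} f` has minimum `max L R - 2 L = R - L - I` by the
intermediate value theorem, which gives (b); reversing time gives (c).
-/

/-- `intervalInf f a b` is the infimum of `f` over `[a, b]`, the quantity by which both transforms
are defined; it is `0` by convention when the infimum does not exist. -/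
noncomputable def intervalInf {X : Type*} [Preorder X] (f : X → ℝ) (a b : X) : ℝ :=
  sInf (f '' Set.Icc a b)

section IntervalInf

open Set

section LinearOrder

variable {X : Type*} [LinearOrder X] {f : X → ℝ} {a b c s : X}

lemma intervalInf_self : intervalInf f a a = f a := by
  rw [intervalInf, Icc_self, image_singleton, csInf_singleton]

lemma intervalInf_le (hf : BddBelow (f '' Icc a b)) (hs : s ∈ Icc a b) :
    intervalInf f a b ≤ f s :=
  csInf_le hf (mem_image_of_mem f hs)

lemma intervalInf_eq_min (hf : BddBelow (f '' Icc a c)) (hab : a ≤ b) (hbc : b ≤ c) :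
    intervalInf f a c = min (intervalInf f a b) (intervalInf f b c) := by
  have hunion : f '' Icc a c = f '' Icc a b ∪ f '' Icc b c := by
    rw [← image_union, Icc_union_Icc_eq_Icc hab hbc]
  rw [hunion, bddBelow_union] at hf
  rw [intervalInf, hunion]
  exact csInf_union hf.1 ((nonempty_Icc.2 hab).image f) hf.2 ((nonempty_Icc.2 hbc).image f)

lemma intervalInf_add_const (hf : BddBelow (f '' Icc a b)) (hab : a ≤ b) (k : ℝ) :
    intervalInf (fun s => f s + k) a b = intervalInf f a b + k := by
  have hmap := (OrderIso.addRight k).map_csInf' ((nonempty_Icc.2 hab).image f) hf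
  rw [image_image] at hmap
  exact hmap.symm

lemma isLeast_sub_two_mul_intervalInf_to_right_end (hf : BddBelow (f '' Icc b c)) (hbc : b ≤ c) :
    IsLeast ((fun s => f s - 2 * intervalInf f s c) '' Icc b c) (-f c) := by
  refine ⟨⟨c, right_mem_Icc.2 hbc, ?_⟩, ?_⟩
  · simp only [intervalInf_self]
    ring
  · rintro _ ⟨s, hs, rfl⟩
    have hbdd : BddBelow (f '' Icc s c) := hf.mono (image_mono (Icc_subset_Icc_left hs.1))
    have hle_left := intervalInf_le hbdd (left_mem_Icc.2 hs.2)
    have hle_right := intervalInf_le hbdd (right_mem_Icc.2 hs.2)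
    dsimp only
    linarith

end LinearOrder

section Continuous

variable {X : Type*} [ConditionallyCompleteLinearOrder X] [TopologicalSpace X] [OrderTopology X]
  [DenselyOrdered X] {f : X → ℝ} {a b c : X}

lemma exists_eq_and_intervalInf_eq {y : ℝ} (hf : ContinuousOn f (Icc a b)) (hab : a ≤ b)
    (hy : intervalInf f a b ≤ y) (hya : y ≤ f a) :
    ∃ s ∈ Icc a b, f s = y ∧ intervalInf f a s = y := by
  obtain ⟨x, hx, hfx⟩ := isCompact_Icc.exists_sInf_image_eq (nonempty_Icc.2 hab) hf
  have hhit : ∀ {u}, u ∈ Icc a b → f u ≤ y → ∃ v ∈ Icc a u, f v = y := fun hu hfu =>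
    intermediate_value_Icc' hu.1 (hf.mono (Icc_subset_Icc_right hu.2)) ⟨hfu, hya⟩
  obtain ⟨z, hz, hfz⟩ := hhit hx (hfx.symm.trans_le hy)
  have hcompact : IsCompact (Icc a b ∩ f ⁻¹' {y}) :=
    isCompact_Icc.of_isClosed_subset (hf.preimage_isClosed_of_isClosed isClosed_Icc
      isClosed_singleton) inter_subset_left
  obtain ⟨s, ⟨hs, hfs⟩, hfirst⟩ := hcompact.exists_isLeast ⟨z, ⟨hz.1, hz.2.trans hx.2⟩, hfz⟩
  refine ⟨s, hs, hfs, IsLeast.csInf_eq ⟨⟨s, right_mem_Icc.2 hs.1, hfs⟩, ?_⟩⟩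
  rintro _ ⟨u, hu, rfl⟩
  by_contra! hlt
  obtain ⟨v, hv, hfv⟩ := hhit ⟨hu.1, hu.2.trans hs.2⟩ hlt.le
  have hsv : s ≤ v := hfirst ⟨⟨hv.1, hv.2.trans (hu.2.trans hs.2)⟩, hfv⟩
  have huv : u = v := le_antisymm (hu.2.trans hsv) hv.2
  exact hlt.ne (huv ▸ hfv)

lemma isLeast_sub_two_mul_intervalInf_from_left (hf : ContinuousOn f (Icc a c)) (hab : a ≤ b)
    (hbc : b ≤ c) :
    IsLeast ((fun s => f s - 2 * intervalInf f a s) '' Icc b c)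
      (intervalInf f b c - intervalInf f a b - intervalInf f a c) := by
  have hbdd : ∀ {u v}, a ≤ u → v ≤ c → BddBelow (f '' Icc u v) := fun hu hv =>
    (isCompact_Icc.bddBelow_image hf).mono (image_mono (Icc_subset_Icc hu hv))
  have hsplit : ∀ s ∈ Icc b c, intervalInf f a s = min (intervalInf f a b) (intervalInf f b s) :=
    fun s hs => intervalInf_eq_min (hbdd le_rfl hs.2) hab hs.1
  have hvalue : intervalInf f b c - intervalInf f a b - intervalInf f a c =
      max (intervalInf f a b) (intervalInf f b c) - 2 * intervalInf f a b := by
    rw [hsplit c (right_mem_Icc.2 hbc)]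
    linarith [min_add_max (intervalInf f a b) (intervalInf f b c)]
  rw [hvalue]
  constructor
  -- The minimum is attained where `f`, started from `b`, first reaches the level
  -- `max (inf_[a,b] f) (inf_[b,c] f)`: until then its running infimum keeps its value at `b`.
  · obtain ⟨s, hs, hfs, hinf⟩ := exists_eq_and_intervalInf_eq
      (hf.mono (Icc_subset_Icc_left hab)) hbc (le_max_right (intervalInf f a b) _)
      (max_le (intervalInf_le (hbdd le_rfl hbc) (right_mem_Icc.2 hab))
        (intervalInf_le (hbdd hab le_rfl) (left_mem_Icc.2 hbc)))
    refine ⟨s, hs, ?_⟩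
    dsimp only
    rw [hsplit s hs, hinf, hfs, min_eq_left (le_max_left _ _)]
  · rintro _ ⟨s, hs, rfl⟩
    have has : a ≤ s := hab.trans hs.1
    have hle_left : intervalInf f a s ≤ intervalInf f a b :=
      (hsplit s hs).trans_le (min_le_left _ _)
    have hle_end := intervalInf_le (hbdd le_rfl hs.2) (right_mem_Icc.2 has)
    have hle_right := intervalInf_le (hbdd hab le_rfl) hs
    exact sub_le_iff_le_add.2 (max_le (by linarith) (by linarith))

open OrderDual in
lemma isLeast_sub_two_mul_intervalInf_to_right (hf : ContinuousOn f (Icc a c)) (hab : a ≤ b)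
    (hbc : b ≤ c) :
    IsLeast ((fun s => f s - 2 * intervalInf f s c) '' Icc a b)
      (intervalInf f a b - intervalInf f b c - intervalInf f a c) := by
  have hdual : ∀ (g : X → ℝ) (u v : X),
      (g ∘ ofDual) '' Icc (toDual v) (toDual u) = g '' Icc u v := fun g u v => by
    rw [Icc_toDual]; rfl
  have hf' : ContinuousOn (f ∘ ofDual) (Icc (toDual c) (toDual a)) := by
    rw [Icc_toDual]; exact hf
  have hleast := isLeast_sub_two_mul_intervalInf_from_left hf' (toDual_le_toDual.2 hbc)
    (toDual_le_toDual.2 hab)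
  have hinf : ∀ u v : X, intervalInf (f ∘ ofDual) (toDual v) (toDual u) = intervalInf f u v :=
    fun u v => congrArg sInf (hdual f u v)
  rw [hinf, hinf, hinf] at hleast
  rw [← hdual]
  convert hleast using 3 with s
  exact congrArg (f (ofDual s) - 2 * ·) (hinf (ofDual s) c).symm

end Continuous

end IntervalInf

section Pitman

open Set

variable {V : Type*} [AddCommGroup V] [Module ℝ V] {T t : ℝ} {α : V} {αv : Module.Dual ℝ V}
  {π : ℝ → V}

lemma pitman_eq : pitman α αv π t = π t - intervalInf (αv ∘ π) 0 t • α :=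
  rfl

lemma copitman_eq : copitman T α αv π t =
    π t - intervalInf (αv ∘ π) t T • α + intervalInf (αv ∘ π) 0 T • α :=
  rfl

lemma dual_comp_pitman (hpair : αv α = 2) :
    αv ∘ pitman α αv π = fun t => (αv ∘ π) t - 2 * intervalInf (αv ∘ π) 0 t := by
  funext t
  simp only [Function.comp_apply, pitman_eq, map_sub, map_smul, hpair, smul_eq_mul]
  ring

lemma dual_comp_copitman (hpair : αv α = 2) :
    αv ∘ copitman T α αv π = fun t =>
      (αv ∘ π) t - 2 * intervalInf (αv ∘ π) t T + 2 * intervalInf (αv ∘ π) 0 T := by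
  funext t
  simp only [Function.comp_apply, copitman_eq, map_add, map_sub, map_smul, hpair, smul_eq_mul]
  ring

theorem copitman_copitman (hT : 0 ≤ T) (hpair : αv α = 2)
    (hbdd : BddBelow ((αv ∘ π) '' Icc 0 T)) :
    EqOn (copitman T α αv (copitman T α αv π)) (copitman T α αv π) (Icc 0 T) := by
  have hinf : ∀ t ∈ Icc 0 T, intervalInf (αv ∘ copitman T α αv π) t T =
      -(αv ∘ π) T + 2 * intervalInf (αv ∘ π) 0 T := fun t ht => by
    have hleast := isLeast_sub_two_mul_intervalInf_to_right_end
      (hbdd.mono (image_mono (Icc_subset_Icc_left ht.1))) ht.2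
    rw [dual_comp_copitman hpair, intervalInf_add_const hleast.bddBelow ht.2]
    exact congrArg (· + _) hleast.csInf_eq
  intro t ht
  rw [copitman_eq, hinf t ht, hinf 0 (left_mem_Icc.2 hT), sub_add_cancel]

theorem copitman_pitman (hT : 0 ≤ T) (hpair : αv α = 2)
    (hf : ContinuousOn (αv ∘ π) (Icc 0 T)) :
    EqOn (copitman T α αv (pitman α αv π)) (fun t => copitman T α αv π t - αv (π 0) • α)
      (Icc 0 T) := by
  have hinf : ∀ t ∈ Icc 0 T, intervalInf (αv ∘ pitman α αv π) t T =
      intervalInf (αv ∘ π) t T - intervalInf (αv ∘ π) 0 t - intervalInf (αv ∘ π) 0 T :=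
    fun t ht => by
      rw [dual_comp_pitman hpair]
      exact (isLeast_sub_two_mul_intervalInf_from_left hf ht.1 ht.2).csInf_eq
  intro t ht
  simp only [copitman_eq, hinf t ht, hinf 0 (left_mem_Icc.2 hT), pitman_eq, intervalInf_self,
    Function.comp_apply]
  module

theorem pitman_copitman (hpair : αv α = 2) (hf : ContinuousOn (αv ∘ π) (Icc 0 T)) :
    EqOn (pitman α αv (copitman T α αv π)) (pitman α αv π) (Icc 0 T) := by
  intro t ht
  have hleast := isLeast_sub_two_mul_intervalInf_to_right hf ht.1 ht.2
  have hinf : intervalInf (αv ∘ copitman T α αv π) 0 t =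
      intervalInf (αv ∘ π) 0 t - intervalInf (αv ∘ π) t T - intervalInf (αv ∘ π) 0 T
        + 2 * intervalInf (αv ∘ π) 0 T := by
    rw [dual_comp_copitman hpair, intervalInf_add_const hleast.bddBelow ht.1]
    exact congrArg (· + _) hleast.csInf_eq
  rw [pitman_eq, hinf, copitman_eq, pitman_eq]
  module

theorem copitman_right_end (hpair : αv α = 2) :
    copitman T α αv π T = pitman α αv π T - αv (pitman α αv π T) • α := by
  have hdual : αv (pitman α αv π T) = αv (π T) - 2 * intervalInf (αv ∘ π) 0 T :=
    congrFun (dual_comp_pitman hpair) T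
  rw [hdual, copitman_eq, pitman_eq, intervalInf_self, Function.comp_apply]
  module

end Pitman

theorem copitman_pitman_identities_general
    {V : Type*} [AddCommGroup V] [Module ℝ V]
    (T : ℝ) (hT : 0 ≤ T) (α : V) (αv : Module.Dual ℝ V) (hpair : αv α = 2)
    (π : ℝ → V) (hcont : ContinuousOn (αv ∘ π) (Set.Icc 0 T)) (h0 : αv (π 0) = 0) :
    (∀ t ∈ Set.Icc 0 T,
      copitman T α αv (copitman T α αv π) t = copitman T α αv π t) ∧
    (∀ t ∈ Set.Icc 0 T,
      copitman T α αv (pitman α αv π) t = copitman T α αv π t) ∧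
    (∀ t ∈ Set.Icc 0 T,
      pitman α αv (copitman T α αv π) t = pitman α αv π t) ∧
    (copitman T α αv π T = pitman α αv π T - αv (pitman α αv π T) • α) := by
  refine ⟨copitman_copitman hT hpair (isCompact_Icc.bddBelow_image hcont), fun t ht => ?_,
    pitman_copitman hpair hcont, copitman_right_end hpair⟩
  simpa only [h0, zero_smul, sub_zero] using copitman_pitman hT hpair hcont ht

/-- Identities relating the Pitman transform `P_α` and the co-Pitman transform `E_α`:
(a) `E_α ∘ E_α = E_α`; (b) `E_α ∘ P_α = E_α`; (c) `P_α ∘ E_α = P_α`;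
(d) `(E_α π)(T) = s_α((P_α π)(T))` where `s_α v = v − α∨(v) α`. -/
theorem copitman_pitman_identities
    {V : Type*} [NormedAddCommGroup V] [NormedSpace ℝ V] [FiniteDimensional ℝ V]
    (T : ℝ) (hT : 0 < T) (α : V) (αv : Module.Dual ℝ V) (hpair : αv α = 2)
    (π : ℝ → V) (hcont : ContinuousOn π (Set.Icc 0 T)) (h0 : π 0 = 0) :
    (∀ t ∈ Set.Icc 0 T,
      copitman T α αv (copitman T α αv π) t = copitman T α αv π t) ∧
    (∀ t ∈ Set.Icc 0 T,
      copitman T α αv (pitman α αv π) t = copitman T α αv π t) ∧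
    (∀ t ∈ Set.Icc 0 T,
      pitman α αv (copitman T α αv π) t = pitman α αv π t) ∧
    (copitman T α αv π T = pitman α αv π T - αv (pitman α αv π T) • α) :=
  copitman_pitman_identities_general T hT.le α αv hpair π
    (αv.continuous_of_finiteDimensional.comp_continuousOn hcont) (by rw [h0, map_zero])
end

section
/- In the Coxeter setting below, let π : [0,T] → V be a continuous codominant path with π(0) = 0, let w ∈ W and let s ∈ S be such that ℓ(σ_s w) > ℓ(w), where ℓ is the length function. Then P_w π is α_s-codominant, i.e. α_s∨((P_w π)(t)) ≥ α_s∨((P_w π)(T)) for all t ∈ [0,T]. -/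
/-!
For an alternating word `s t s …` of length at most `m(s,t)`, the transform subtracts multiples of
`α_s` and `α_t` whose coefficients are nested infima of the coordinates `α_s∨(π)`, `α_t∨(π)`, with
weights that are, up to scaling, values of Chebyshev polynomials at `cos (π / m(s,t))`. Passing from
one length to the next amounts to an identity between running infima (`runInf_pitman_swap`) that
holds for nonnegative weights; the weights are nonnegative below index `m(s,t)` and vanish at
`m(s,t) - 1`, which gives the braid relation.

The same weights are the coordinates of the roots of the dihedral subgroup, so their positivity
shows that two reduced words of an element are related by braid moves. Hence `P_w` does not depend
on the reduced word, and one may take `w = (t s t ⋯) v` with the alternating factor shorter than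
`m(s,t)` and neither `s` nor `t` a left descent of `v`. By induction on the length `P_v π` is
codominant for `s` and `t`; then its nested infima at `T` are sums of endpoint values, and the
minimum of `α_s∨(P_w π)` at `T` reduces to the three-term recurrence of the weights.
-/

open Set

namespace PitmanTransform

section RunningInfimum

/-- The running infimum `t ↦ inf_{0 ≤ u ≤ t} f u` of a function on `[0, ∞)`; it takes the junk
value `0` at negative times. -/
noncomputable def runInf (f : ℝ → ℝ) : ℝ → ℝ := fun t => sInf (f '' Icc 0 t)

variable {f g : ℝ → ℝ} {t u b : ℝ}

theorem runInf_of_neg (f : ℝ → ℝ) (ht : t < 0) : runInf f t = 0 := by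
  simp [runInf, Icc_eq_empty (not_le.2 ht)]

theorem runInf_congr (h : EqOn f g (Icc 0 t)) : runInf f t = runInf g t := by
  rw [runInf, runInf, h.image_eq]

theorem runInf_zero : runInf 0 = 0 := by
  funext t
  rcases lt_or_ge t 0 with ht | ht
  · exact runInf_of_neg 0 ht
  · simp [runInf, nonempty_Icc.2 ht]

theorem le_runInf (ht : 0 ≤ t) (h : ∀ u ∈ Icc 0 t, b ≤ f u) : b ≤ runInf f t :=
  le_csInf ((nonempty_Icc.2 ht).image f) (forall_mem_image.2 h)

theorem runInf_le (hf : ContinuousOn f (Ici 0)) (hu : u ∈ Icc 0 t) : runInf f t ≤ f u :=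
  csInf_le (isCompact_Icc.image_of_continuousOn (hf.mono Icc_subset_Ici_self)).bddBelow
    (mem_image_of_mem f hu)

theorem exists_eq_runInf (hf : ContinuousOn f (Ici 0)) (ht : 0 ≤ t) :
    ∃ u ∈ Icc 0 t, f u = runInf f t :=
  (isCompact_Icc.image_of_continuousOn (hf.mono Icc_subset_Ici_self)).sInf_mem
    ((nonempty_Icc.2 ht).image f)

theorem antitoneOn_runInf (hf : ContinuousOn f (Ici 0)) : AntitoneOn (runInf f) (Ici 0) :=
  fun _ hu _ _ hut => le_runInf hu fun _ hv => runInf_le hf ⟨hv.1, hv.2.trans hut⟩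

theorem runInf_const_smul (f : ℝ → ℝ) {c : ℝ} (hc : 0 ≤ c) : runInf (c • f) = c • runInf f := by
  funext t
  rw [runInf, Pi.smul_apply, runInf, ← Real.sInf_smul_of_nonneg hc, ← image_smul, image_image]
  rfl

theorem runInf_eq_of_isMinOn (ht : 0 ≤ t) (hf : ContinuousOn f (Ici 0))
    (h : IsMinOn f (Icc 0 t) t) : runInf f t = f t :=
  (runInf_le hf ⟨ht, le_rfl⟩).antisymm (le_runInf ht h)

theorem isMinOn_of_runInf_eq (hf : ContinuousOn f (Ici 0)) (h : runInf f t = f t) :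
    IsMinOn f (Icc 0 t) t :=
  fun _ hu => h.ge.trans (runInf_le hf hu)

theorem runInf_eq_sInf_image_mul (f : ℝ → ℝ) (ht : 0 ≤ t) :
    runInf f t = sInf ((fun r => f (r * t)) '' Icc 0 1) := by
  have hIcc : (fun r => r * t) '' Icc 0 1 = Icc 0 t := by
    simpa using image_mul_right_Icc zero_le_one ht
  rw [runInf, ← hIcc, image_image]

@[fun_prop]
theorem continuousOn_runInf (hf : ContinuousOn f (Ici 0)) : ContinuousOn (runInf f) (Ici 0) := by
  have hf_abs : Continuous fun x => f |x| := hf.comp_continuous continuous_abs abs_nonneg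
  have hcont : Continuous fun t => sInf ((fun r => f |r * t|) '' Icc 0 1) :=
    isCompact_Icc.continuous_sInf
      (hf_abs.comp (by fun_prop : Continuous fun p : ℝ × ℝ => p.2 * p.1))
  refine hcont.continuousOn.congr fun t ht => ?_
  rw [runInf_eq_sInf_image_mul f ht]
  exact congrArg sInf (image_congr fun r hr => by rw [abs_of_nonneg (mul_nonneg hr.1 ht)])

variable {Z h : ℝ → ℝ} {p x q : ℝ}

theorem exists_le_sub_two_mul_runInf (hZ : ContinuousOn Z (Ici 0)) (hp : 0 ≤ p)
    (hx : x ∈ Icc p q) :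
    ∃ y ∈ Icc p q, Z y ≤ Z x - 2 * runInf Z x + runInf Z p + runInf Z q := by
  have hx0 : 0 ≤ x := hp.trans hx.1
  obtain ⟨r, hr, hZr⟩ := exists_eq_runInf hZ (hx0.trans hx.2)
  have hxp : runInf Z x ≤ runInf Z p := antitoneOn_runInf hZ hp hx0 hx.1
  rcases le_total p r with hpr | hrp
  · exact ⟨r, ⟨hpr, hr.2⟩, by linarith [runInf_le hZ ⟨hx0, le_rfl⟩]⟩
  · have hxr : runInf Z x ≤ Z r := runInf_le hZ ⟨hr.1, hrp.trans hx.1⟩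
    exact ⟨x, hx, by linarith⟩

theorem exists_eq_runInf_of_lt (hZ : ContinuousOn Z (Ici 0)) (hp : 0 ≤ p) (hx : p ≤ x)
    (hlt : Z x < runInf Z p) : ∃ y ∈ Icc p x, Z y = runInf Z p ∧ runInf Z y = runInf Z p := by
  set m := runInf Z p
  have hZ_Icc : ContinuousOn Z (Icc p x) := hZ.mono fun u hu => hp.trans hu.1
  have hcompact : IsCompact (Icc p x ∩ Z ⁻¹' {m}) :=
    isCompact_Icc.of_isClosed_subset
      (hZ_Icc.preimage_isClosed_of_isClosed isClosed_Icc isClosed_singleton) inter_subset_left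
  have hm : m ∈ Icc (Z x) (Z p) := ⟨hlt.le, runInf_le hZ ⟨hp, le_rfl⟩⟩
  obtain ⟨y, ⟨hy, hZy⟩, hleast⟩ :=
    hcompact.exists_isLeast (intermediate_value_Icc' hx hZ_Icc hm)
  refine ⟨y, hy, hZy, (antitoneOn_runInf hZ hp (hp.trans hy.1) hy.1).antisymm <|
    le_runInf (hp.trans hy.1) fun u hu => ?_⟩
  rcases le_total u p with hup | hpu
  · exact runInf_le hZ ⟨hu.1, hup⟩
  by_contra! hum
  obtain ⟨v, hv, hZv⟩ := intermediate_value_Icc' hpu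
    (hZ_Icc.mono (Icc_subset_Icc_right (hu.2.trans hy.2))) ⟨hum.le, hm.2⟩
  have hyv : y ≤ v := hleast ⟨⟨hv.1, hv.2.trans (hu.2.trans hy.2)⟩, hZv⟩
  have huy : u = y := hu.2.antisymm (hyv.trans hv.2)
  exact hum.ne (huy ▸ hZy)

theorem exists_sub_two_mul_runInf_le (hZ : ContinuousOn Z (Ici 0)) (hp : 0 ≤ p)
    (hx : x ∈ Icc p q) :
    ∃ y ∈ Icc p q, Z y - 2 * runInf Z y + runInf Z p + runInf Z q ≤ Z x := by
  have hq : 0 ≤ q := hp.trans (hx.1.trans hx.2)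
  obtain ⟨m, hm, hmin⟩ := isCompact_Icc.exists_isMinOn ⟨x, hx⟩
    (hZ.mono fun u (hu : u ∈ Icc p q) => hp.trans hu.1)
  have hmx : Z m ≤ Z x := hmin hx
  rcases le_or_gt (runInf Z p) (Z m) with hpm | hmp
  · have hpq : runInf Z p ≤ runInf Z q := le_runInf hq fun u hu => by
      rcases le_total u p with hup | hpu
      · exact runInf_le hZ ⟨hu.1, hup⟩
      · exact hpm.trans (hmin ⟨hpu, hu.2⟩)
    have hqm := antitoneOn_runInf hZ (hp.trans hm.1) hq hm.2
    exact ⟨m, hm, by linarith⟩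
  · obtain ⟨y, hy, hZy, hIy⟩ := exists_eq_runInf_of_lt hZ hp hm.1 hmp
    have hqx : runInf Z q ≤ Z x := runInf_le hZ ⟨hp.trans hx.1, hx.2⟩
    exact ⟨y, ⟨hy.1, hy.2.trans hm.2⟩, by linarith⟩

theorem runInf_pitman_swap (hZ : ContinuousOn Z (Ici 0)) (hh : ContinuousOn h (Ici 0)) {c : ℝ}
    (hc : 0 ≤ c) :
    runInf (c • (Z - (2 : ℝ) • runInf Z) + runInf (h + c • runInf Z)) + c • runInf Z =
      runInf (c • Z + runInf h) := by
  funext q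
  rcases lt_or_ge q 0 with hq | hq
  · simp [runInf_of_neg _ hq]
  set k := h + c • runInf Z with hk_def
  set l := c • (Z - (2 : ℝ) • runInf Z) + runInf k with hl_def
  set r := c • Z + runInf h with hr_def
  have hk : ContinuousOn k (Ici 0) := by fun_prop
  have hl : ContinuousOn l (Ici 0) := by fun_prop
  have hr : ContinuousOn r (Ici 0) := by fun_prop
  refine le_antisymm ?_ ?_
  · obtain ⟨x, hx, hrx⟩ := exists_eq_runInf hr hq
    obtain ⟨p, hp, hhp⟩ := exists_eq_runInf hh hx.1
    obtain ⟨y, hy, hyx⟩ := exists_sub_two_mul_runInf_le hZ hp.1 ⟨hp.2, hx.2⟩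
    have hly := runInf_le hl ⟨hp.1.trans hy.1, hy.2⟩
    have hkp := runInf_le hk ⟨hp.1, hy.1⟩
    have hcyx := mul_le_mul_of_nonneg_left hyx hc
    simp only [hk_def, hl_def, hr_def, Pi.add_apply, Pi.sub_apply, Pi.smul_apply, smul_eq_mul]
      at hly hkp hrx ⊢
    linarith
  · obtain ⟨x, hx, hlx⟩ := exists_eq_runInf hl hq
    obtain ⟨p, hp, hkp⟩ := exists_eq_runInf hk hx.1
    obtain ⟨y, hy, hyx⟩ := exists_le_sub_two_mul_runInf hZ hp.1 ⟨hp.2, hx.2⟩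
    have hry := runInf_le hr ⟨hp.1.trans hy.1, hy.2⟩
    have hhp := runInf_le hh ⟨hp.1, hy.1⟩
    have hcyx := mul_le_mul_of_nonneg_left hyx hc
    simp only [hk_def, hl_def, hr_def, Pi.add_apply, Pi.sub_apply, Pi.smul_apply, smul_eq_mul]
      at hry hkp hlx ⊢
    linarith

end RunningInfimum

section NestedInfimum

/-- The nested infimum `t ↦ inf_{t ≥ u₀ ≥ u₁ ≥ ⋯ ≥ uₙ₋₁ ≥ 0} (f₀ u₀ + ⋯ + fₙ₋₁ uₙ₋₁)`. -/
noncomputable def nestedInf : (ℕ → ℝ → ℝ) → ℕ → ℝ → ℝ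
  | _, 0 => 0
  | f, n + 1 => runInf (f 0 + nestedInf (fun i => f (i + 1)) n)

variable {f f' : ℕ → ℝ → ℝ} {z : ℝ → ℝ} {d : ℕ → ℝ} {T : ℝ} {n : ℕ}

theorem nestedInf_succ (f : ℕ → ℝ → ℝ) (n : ℕ) :
    nestedInf f (n + 1) = runInf (f 0 + nestedInf (fun i => f (i + 1)) n) :=
  rfl

@[fun_prop]
theorem continuousOn_nestedInf (hf : ∀ i, ContinuousOn (f i) (Ici 0)) (n : ℕ) :
    ContinuousOn (nestedInf f n) (Ici 0) := by
  induction n generalizing f with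
  | zero => exact continuousOn_const
  | succ n ih => exact continuousOn_runInf ((hf 0).add (ih fun i => hf (i + 1)))

theorem antitoneOn_nestedInf (hf : ∀ i, ContinuousOn (f i) (Ici 0)) (n : ℕ) :
    AntitoneOn (nestedInf f n) (Ici 0) := by
  cases n with
  | zero => exact antitoneOn_const
  | succ n =>
    exact antitoneOn_runInf ((hf 0).add (continuousOn_nestedInf (fun i => hf (i + 1)) n))

theorem nestedInf_succ_of_eq_zero (h : f n = 0) : nestedInf f (n + 1) = nestedInf f n := by
  induction n generalizing f with
  | zero => rw [nestedInf_succ, h, nestedInf, zero_add, runInf_zero, nestedInf]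
  | succ n ih => rw [nestedInf_succ, ih (f := fun i => f (i + 1)) h, ← nestedInf_succ]

theorem nestedInf_eq_sum (hT : 0 ≤ T) (hf : ∀ i, ContinuousOn (f i) (Ici 0))
    (hmin : ∀ i < n, IsMinOn (f i) (Icc 0 T) T) :
    nestedInf f n T = ∑ i ∈ Finset.range n, f i T := by
  induction n generalizing f with
  | zero => rfl
  | succ n ih =>
    have hf_tail (i : ℕ) : ContinuousOn (f (i + 1)) (Ici 0) := hf (i + 1)
    have hmin_tail : IsMinOn (nestedInf (fun i => f (i + 1)) n) (Icc 0 T) T :=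
      fun u hu => antitoneOn_nestedInf hf_tail n hu.1 hT hu.2
    have hmin_add : IsMinOn (f 0 + nestedInf (fun i => f (i + 1)) n) (Icc 0 T) T :=
      (hmin 0 n.succ_pos).add hmin_tail
    rw [nestedInf_succ, runInf_eq_of_isMinOn hT (by fun_prop) hmin_add, Pi.add_apply,
      ih hf_tail fun i hi => hmin (i + 1) (Nat.succ_lt_succ hi), Finset.sum_range_succ', add_comm]

theorem nestedInf_pitman (hz : ContinuousOn z (Ici 0)) (hf : ∀ i, ContinuousOn (f i) (Ici 0))
    {j : ℕ} (hd : ∀ k ≤ j, 0 ≤ d k) (hf_even : ∀ k, f (2 * k) = d k • z)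
    (hf'_even : ∀ k, f' (2 * k) = d k • (z - (2 : ℝ) • runInf z))
    (hf'_odd : ∀ k, f' (2 * k + 1) = f (2 * k + 1) + (d (k + 1) + d k) • runInf z) :
    nestedInf f' (2 * j) + d 0 • runInf z = nestedInf f (2 * j + 1) := by
  induction j generalizing f f' d with
  | zero =>
    rw [nestedInf_succ, hf_even 0, ← runInf_const_smul z (hd 0 le_rfl)]
    simp [nestedInf]
  | succ j ih =>
    have tail : nestedInf (fun i => f' (i + 2)) (2 * j) + d 1 • runInf z =
        nestedInf (fun i => f (i + 2)) (2 * j + 1) :=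
      ih (d := fun k => d (k + 1)) (fun i => hf (i + 2)) (fun k hk => hd (k + 1) (by lia))
        (fun k => hf_even (k + 1)) (fun k => hf'_even (k + 1)) (fun k => hf'_odd (k + 1))
    have hodd : f' 1 + nestedInf (fun i => f' (i + 2)) (2 * j) =
        (f 1 + nestedInf (fun i => f (i + 2)) (2 * j + 1)) + d 0 • runInf z := by
      rw [hf'_odd 0, ← tail]
      module
    calc nestedInf f' (2 * (j + 1)) + d 0 • runInf z
        = runInf (f' 0 + runInf (f' 1 + nestedInf (fun i => f' (i + 2)) (2 * j)))
            + d 0 • runInf z := rfl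
      _ = runInf (d 0 • z + runInf (f 1 + nestedInf (fun i => f (i + 2)) (2 * j + 1))) := by
          rw [hodd, hf'_even 0, runInf_pitman_swap hz
            ((hf 1).add (continuousOn_nestedInf (fun i => hf (i + 2)) _)) (hd 0 j.succ.zero_le)]
      _ = nestedInf f (2 * (j + 1) + 1) := by rw [← hf_even 0]; rfl

end NestedInfimum

section Alternation

variable {β : Type*} (s t : β)

/-- The `i`-th term of the alternating sequence `s, t, s, t, …`, indexed from `0`. -/
def alternate (i : ℕ) : β := if Even i then s else t

@[simp]
theorem alternate_zero : alternate s t 0 = s := rfl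

@[simp]
theorem alternate_succ (i : ℕ) : alternate s t (i + 1) = alternate t s i := by
  simp only [alternate, Nat.even_add_one]
  split_ifs <;> rfl

@[simp]
theorem alternate_two_mul (i : ℕ) : alternate s t (2 * i) = s := by simp [alternate]

variable {s t} in
theorem alternate_cases {p : β → Prop} (hs : p s) (ht : p t) (i : ℕ) : p (alternate s t i) := by
  rw [alternate]
  split_ifs
  exacts [hs, ht]

open CoxeterSystem (alternatingWord)

/-- The alternating word `s t s …` of length `k`. It is fixed by its first letter, whereas
`CoxeterSystem.alternatingWord` is fixed by its last one. -/
def altWord (k : ℕ) : List β := (alternatingWord t s k).reverse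

@[simp]
theorem altWord_zero : altWord s t 0 = [] := rfl

theorem altWord_succ (k : ℕ) : altWord s t (k + 1) = s :: altWord t s k := by
  simp [altWord, CoxeterSystem.alternatingWord_succ]

@[simp]
theorem length_altWord (k : ℕ) : (altWord s t k).length = k := by simp [altWord]

theorem altWord_succ' (k : ℕ) : altWord s t (k + 1) = altWord s t k ++ [alternate s t k] := by
  simp [altWord, CoxeterSystem.alternatingWord_succ', alternate]

theorem altWord_add (k n : ℕ) :
    altWord s t (k + n) = altWord s t k ++ altWord (alternate s t k) (alternate t s k) n := by
  induction k generalizing s t with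
  | zero => simp
  | succ k ih => simp [Nat.succ_add, altWord_succ, ih]

end Alternation

section DihedralCoefficients

open Polynomial Polynomial.Chebyshev Real

variable {B : Type*} {A : Matrix B B ℝ} {s t : B}

/-- The dihedral coefficients of a Cartan matrix `A`: for the reflections `r_s v = v - α_s∨(v) α_s`
of a root datum with `A s t = α_s∨(α_t)`, the coroots met along the alternating word `s t s …` are
the combinations of `α_s∨` and `α_t∨` with two consecutive dihedral coefficients. -/
def dihedralCoeff (A : Matrix B B ℝ) : B → B → ℕ → ℝ
  | _, _, 0 => 1
  | s, t, 1 => -A s t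
  | s, t, n + 2 => -A s t * dihedralCoeff A t s (n + 1) - dihedralCoeff A s t n

theorem dihedralCoeff_add_two (A : Matrix B B ℝ) (s t : B) (n : ℕ) :
    dihedralCoeff A s t (n + 2) = -A s t * dihedralCoeff A t s (n + 1) - dihedralCoeff A s t n :=
  rfl

theorem dihedralCoeff_eq_S (A : Matrix B B ℝ) (s t : B) (n : ℕ) :
    dihedralCoeff A s t (2 * n) = (S ℝ n).eval (A s t * A t s - 2) +
        (S ℝ (n - 1)).eval (A s t * A t s - 2) ∧
      dihedralCoeff A s t (2 * n + 1) = -A s t * (S ℝ n).eval (A s t * A t s - 2) := by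
  induction n generalizing s t with
  | zero => simp [dihedralCoeff]
  | succ n ih =>
    have hS : (S ℝ (n + 1)).eval (A s t * A t s - 2) = (A s t * A t s - 2) *
        (S ℝ n).eval (A s t * A t s - 2) - (S ℝ (n - 1)).eval (A s t * A t s - 2) := by
      simp [S_add_one]
    have heven (s t : B) : dihedralCoeff A s t (2 * n + 2) =
        -A s t * dihedralCoeff A t s (2 * n + 1) - dihedralCoeff A s t (2 * n) := rfl
    have hodd : dihedralCoeff A s t (2 * n + 3) =
        -A s t * dihedralCoeff A t s (2 * n + 2) - dihedralCoeff A s t (2 * n + 1) := rfl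
    simp only [mul_add_one, Nat.cast_add, Nat.cast_one, add_sub_cancel_right, hodd, heven,
      (ih s t).1, (ih s t).2, (ih t s).1, (ih t s).2, mul_comm (A t s) (A s t), hS]
    constructor <;> ring

theorem dihedralCoeff_add_two' (A : Matrix B B ℝ) (s t : B) (n : ℕ) :
    dihedralCoeff A s t (n + 2) =
      -A (alternate t s n) (alternate s t n) * dihedralCoeff A s t (n + 1) -
        dihedralCoeff A s t n := by
  rw [dihedralCoeff_add_two, sub_left_inj]
  obtain ⟨i, rfl | rfl⟩ := n.even_or_odd'
  · simp only [(dihedralCoeff_eq_S A _ _ i).2, alternate_two_mul, mul_comm (A t s) (A s t)]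
    ring
  · have hS (s t : B) := (dihedralCoeff_eq_S A s t (i + 1)).1
    simp only [alternate_succ, alternate_two_mul, add_assoc, Nat.reduceAdd] at hS ⊢
    rw [show 2 * i + 2 = 2 * (i + 1) from rfl, hS, hS, mul_comm (A t s) (A s t)]

theorem dihedralCoeff_eq_U {x : ℝ} (hx : x ≠ 0) (h : A s t * A t s = (2 * x) ^ 2) (n : ℕ) :
    dihedralCoeff A s t n = alternate 1 (-A s t / (2 * x)) n * (U ℝ n).eval x := by
  induction n using Nat.twoStepInduction generalizing s t with
  | zero => simp [dihedralCoeff]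
  | one =>
    simp only [dihedralCoeff, alternate_succ, alternate_zero, Nat.cast_one, U_one, eval_mul,
      eval_X, eval_ofNat]
    field_simp
  | more n ih ih' =>
    have hU : (U ℝ ((n + 2 : ℕ) : ℤ)).eval x =
        2 * x * (U ℝ ((n + 1 : ℕ) : ℤ)).eval x - (U ℝ n).eval x := by
      simp [U_add_two]
    have halt : -A s t * alternate 1 (-A t s / (2 * x)) (n + 1) =
        2 * x * alternate 1 (-A s t / (2 * x)) n := by
      rw [alternate_succ, alternate, alternate]
      split_ifs <;> field_simp
      linarith
    rw [dihedralCoeff_add_two, ih h, ih' (mul_comm (A s t) _ ▸ h), hU]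
    simp only [alternate_succ] at halt ⊢
    linear_combination (U ℝ ((n + 1 : ℕ) : ℤ)).eval x * halt

theorem eval_U_cos_pi_div_nonneg {k m : ℕ} (h : m = 0 ∨ k < m ∧ 2 ≤ m) :
    0 ≤ (U ℝ k).eval (cos (π / m)) := by
  rcases h with rfl | ⟨hkm, hm⟩
  · simp only [Nat.cast_zero, div_zero, cos_zero, U_eval_one]
    positivity
  have hm0 : (0 : ℝ) < m := by positivity
  have hsin : 0 < sin (π / m) := sin_pos_of_pos_of_lt_pi (by positivity)
    (div_lt_self pi_pos (by exact_mod_cast hm))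
  have hangle : (k + 1) * (π / m) ≤ π := by
    rw [mul_div_left_comm]
    exact mul_le_of_le_one_right pi_pos.le ((div_le_one hm0).2 (by exact_mod_cast hkm))
  refine nonneg_of_mul_nonneg_left ?_ hsin
  rw [U_real_cos]
  exact sin_nonneg_of_nonneg_of_le_pi (by positivity) (by exact_mod_cast hangle)

theorem eval_U_sub_one_cos_pi_div {m : ℕ} (hm : 2 ≤ m) :
    (U ℝ ((m - 1 : ℕ) : ℤ)).eval (cos (π / m)) = 0 := by
  have hsin : sin (π / m) ≠ 0 := (sin_pos_of_pos_of_lt_pi (by positivity)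
    (div_lt_self pi_pos (by exact_mod_cast hm))).ne'
  refine (mul_eq_zero_iff_right hsin).1 ?_
  rw [U_real_cos, Int.cast_natCast, Nat.cast_sub (by lia)]
  simp [mul_div_cancel₀ π (by positivity : (m : ℝ) ≠ 0)]

theorem cos_pi_div_pos {m : ℕ} (h1 : m ≠ 1) (h2 : m ≠ 2) : 0 < cos (π / m) := by
  rcases Nat.eq_zero_or_pos m with rfl | hm
  · simp
  have hm2 : 2 < m := by lia
  exact cos_pos_of_mem_Ioo ⟨by linarith [pi_pos, show (0 : ℝ) ≤ π / m by positivity],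
    div_lt_div_of_pos_left pi_pos two_pos (by exact_mod_cast hm2)⟩

/-- `A` is a real Cartan matrix for the Coxeter matrix `M`. An infinite entry of `M` is encoded as
`0`, for which `cos (π / M s t) = cos 0 = 1`. -/
structure IsCoxeterCartan (M : CoxeterMatrix B) (A : Matrix B B ℝ) : Prop where
  diag : ∀ s, A s s = 2
  off_diag : ∀ s t, s ≠ t → (M s t = 2 ∧ A s t = 0 ∧ A t s = 0) ∨
    (A s t < 0 ∧ A t s < 0 ∧ A s t * A t s = 4 * cos (π / M s t) ^ 2)

/-- The Cartan matrix of the geometric representation; it shows that every Coxeter matrix has a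
Cartan matrix. -/
noncomputable def cosMatrix (M : CoxeterMatrix B) : Matrix B B ℝ :=
  Matrix.of fun s t => -2 * cos (π / M s t)

theorem isCoxeterCartan_cosMatrix (M : CoxeterMatrix B) : IsCoxeterCartan M (cosMatrix M) where
  diag s := by simp [cosMatrix]
  off_diag s t hst := by
    simp only [cosMatrix, Matrix.of_apply, M.symmetric t s]
    by_cases hM2 : M s t = 2
    · simp [hM2]
    have hcos : 0 < cos (π / M s t) := cos_pi_div_pos (M.off_diagonal s t hst) hM2
    exact .inr ⟨by linarith, by linarith, by ring⟩

namespace IsCoxeterCartan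

variable {M : CoxeterMatrix B} (hA : IsCoxeterCartan M A)
include hA

theorem eq_zero_or_cos_pos (hst : s ≠ t) :
    (M s t = 2 ∧ A s t = 0 ∧ A t s = 0) ∨
      (0 < cos (π / M s t) ∧ A s t < 0 ∧ A s t * A t s = (2 * cos (π / M s t)) ^ 2) := by
  refine (hA.off_diag s t hst).imp_right fun ⟨hneg, hneg', hprod⟩ => ?_
  have hM2 : M s t ≠ 2 := fun hM => by
    have := mul_pos_of_neg_of_neg hneg hneg'
    simp [hprod, hM] at this
  exact ⟨cos_pi_div_pos (M.off_diagonal s t hst) hM2, hneg, by rw [hprod]; ring⟩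

theorem dihedralCoeff_nonneg (hst : s ≠ t) {k : ℕ} (hk : M s t = 0 ∨ k < M s t) :
    0 ≤ dihedralCoeff A s t k := by
  rcases hA.eq_zero_or_cos_pos hst with ⟨hM, hzero, -⟩ | ⟨hcos, hneg, hprod⟩
  · obtain rfl | rfl : k = 0 ∨ k = 1 := by lia
    · exact zero_le_one
    · simp [dihedralCoeff, hzero]
  have hM1 : M s t ≠ 1 := M.off_diagonal s t hst
  rw [dihedralCoeff_eq_U hcos.ne' hprod]
  exact mul_nonneg
    (alternate_cases zero_le_one (div_nonneg (neg_nonneg.2 hneg.le) (by positivity)) k)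
    (eval_U_cos_pi_div_nonneg (by lia))

theorem dihedralCoeff_sub_one_eq_zero (hst : s ≠ t) (hM : M s t ≠ 0) :
    dihedralCoeff A s t (M s t - 1) = 0 := by
  rcases hA.eq_zero_or_cos_pos hst with ⟨hM, hzero, -⟩ | ⟨hcos, -, hprod⟩
  · simp [hM, dihedralCoeff, hzero]
  have hM1 : M s t ≠ 1 := M.off_diagonal s t hst
  rw [dihedralCoeff_eq_U hcos.ne' hprod, eval_U_sub_one_cos_pi_div (by lia), mul_zero]

end IsCoxeterCartan

end DihedralCoefficients

section CoxeterWords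

variable {B W : Type*} [Group W] {M : CoxeterMatrix B} {cs : CoxeterSystem M W} {s t : B} {w : W}
  {l : List B} {k : ℕ}

theorem wordProd_altWord_braid (cs : CoxeterSystem M W) (s t : B) :
    cs.wordProd (altWord s t (M s t)) = cs.wordProd (altWord t s (M s t)) := by
  have h := cs.wordProd_braidWord_eq t s
  rw [CoxeterSystem.braidWord, CoxeterSystem.braidWord, M.symmetric t s] at h
  rw [altWord, altWord, cs.wordProd_reverse, cs.wordProd_reverse, h]

theorem isReduced_of_wordProd_eq {l' : List B} (hl : cs.IsReduced l)
    (hprod : cs.wordProd l = cs.wordProd l') (hlen : l.length = l'.length) : cs.IsReduced l' := by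
  rw [CoxeterSystem.IsReduced, ← hprod, hl.eq, hlen]

theorem isReduced_cons_iff :
    cs.IsReduced (s :: l) ↔ cs.IsReduced l ∧ ¬cs.IsLeftDescent (cs.wordProd l) s := by
  rw [cs.not_isLeftDescent_iff]
  constructor
  · intro h
    have hl : cs.IsReduced l := h.drop 1
    exact ⟨hl, by rw [← cs.wordProd_cons, h.eq, hl.eq, List.length_cons]⟩
  · rintro ⟨hl, hs⟩
    rw [CoxeterSystem.IsReduced, cs.wordProd_cons, hs, hl.eq, List.length_cons]

theorem isLeftDescent_wordProd_cons (h : cs.IsReduced (s :: l)) :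
    cs.IsLeftDescent (cs.wordProd (s :: l)) s := by
  rw [cs.isLeftDescent_iff_not_isLeftDescent_mul, cs.wordProd_cons,
    cs.simple_mul_simple_cancel_left]
  exact (isReduced_cons_iff.1 h).2

theorem wordProd_altWord_append_braid (cs : CoxeterSystem M W) (s t : B) (l : List B) :
    cs.wordProd (altWord s t (M s t) ++ l) = cs.wordProd (altWord t s (M s t) ++ l) := by
  rw [cs.wordProd_append, cs.wordProd_append, wordProd_altWord_braid]

theorem lt_of_not_isLeftDescent_altWord_append (h : cs.IsReduced (altWord t s k ++ l))
    (hs : ¬cs.IsLeftDescent (cs.wordProd (altWord t s k ++ l)) s) : M s t = 0 ∨ k < M s t := by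
  by_contra! hM
  obtain ⟨n, rfl⟩ := Nat.exists_eq_add_of_le hM.2
  obtain ⟨m, hm⟩ := Nat.exists_eq_succ_of_ne_zero hM.1
  rw [altWord_add, List.append_assoc] at h hs
  have hprod := (wordProd_altWord_append_braid cs s t
    (altWord (alternate t s (M s t)) (alternate s t (M s t)) n ++ l)).symm
  have hred := isReduced_of_wordProd_eq h hprod (by simp)
  rw [hprod] at hs
  rw [hm, altWord_succ] at hs hred
  exact hs (isLeftDescent_wordProd_cons hred)

theorem exists_altWord_append_of_not_isLeftDescent (hs : ¬cs.IsLeftDescent w s) (t : B) :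
    ∃ k l, (M s t = 0 ∨ k < M s t) ∧ cs.IsReduced (altWord t s k ++ l) ∧
      w = cs.wordProd (altWord t s k ++ l) ∧
      ¬cs.IsLeftDescent (cs.wordProd l) s ∧ ¬cs.IsLeftDescent (cs.wordProd l) t := by
  suffices ∃ k l, cs.IsReduced (altWord t s k ++ l) ∧ w = cs.wordProd (altWord t s k ++ l) ∧
      ¬cs.IsLeftDescent (cs.wordProd l) s ∧ ¬cs.IsLeftDescent (cs.wordProd l) t by
    obtain ⟨k, l, hred, rfl, hls, hlt⟩ := this
    exact ⟨k, l, lt_of_not_isLeftDescent_altWord_append hred hs, hred, rfl, hls, hlt⟩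
  induction hn : cs.length w using Nat.strong_induction_on generalizing w s t with
  | _ n ih =>
    by_cases ht : cs.IsLeftDescent w t
    · have htw : ¬cs.IsLeftDescent (cs.simple t * w) t :=
        cs.isLeftDescent_iff_not_isLeftDescent_mul.1 ht
      obtain ⟨k, l, hred, hw, hlt, hls⟩ := ih _ (hn ▸ ht) htw s rfl
      refine ⟨k + 1, l, ?_, ?_, hls, hlt⟩
      · rw [altWord_succ, List.cons_append, isReduced_cons_iff]
        exact ⟨hred, hw ▸ htw⟩
      · rw [altWord_succ, List.cons_append, cs.wordProd_cons, ← hw,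
          cs.simple_mul_simple_cancel_left]
    · obtain ⟨l, hl, rfl⟩ := cs.exists_isReduced w
      exact ⟨0, l, hl, rfl, hs, ht⟩

end CoxeterWords

section GeometricRepresentation

open Polynomial Polynomial.Chebyshev Finsupp

variable {B : Type*} {M : CoxeterMatrix B} {A : Matrix B B ℝ} {s t : B}

/-- Evaluation at the root `α_s` on formal combinations of coroots, which sends the basis vector
of the coroot `α_t∨` to `A t s = α_t∨(α_s)`. -/
noncomputable def rootEval (A : Matrix B B ℝ) (s : B) : Module.Dual ℝ (B →₀ ℝ) :=
  linearCombination ℝ fun t => A t s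

@[simp]
theorem rootEval_single (A : Matrix B B ℝ) (s t : B) : rootEval A s (single t 1) = A t s := by
  simp [rootEval]

namespace IsCoxeterCartan

variable (hA : IsCoxeterCartan M A)

/-- The simple reflection of the geometric representation on formal combinations of coroots. -/
noncomputable def corootReflection (s : B) : (B →₀ ℝ) ≃ₗ[ℝ] (B →₀ ℝ) :=
  Module.reflection (x := single s 1) (f := rootEval A s) (by simp [hA.diag s])

theorem corootReflection_single (s t : B) :
    hA.corootReflection s (single t 1) = single t 1 - A t s • single s 1 := by
  simp [corootReflection, Module.reflection_apply]

theorem corootReflection_single_self (s : B) :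
    hA.corootReflection s (single s 1) = -single s 1 :=
  Module.reflection_apply_self _

theorem corootReflection_mul_pow_eq_one (s t : B) :
    (hA.corootReflection s * hA.corootReflection t) ^ M s t = 1 := by
  rcases eq_or_ne s t with rfl | hst
  · ext1 z
    simpa [corootReflection] using Module.involutive_reflection _ z
  rcases eq_or_ne (M s t) 0 with hM | hM
  · rw [hM, pow_zero]
  have hzero := hA.dihedralCoeff_sub_one_eq_zero hst hM
  ext1 z
  rw [corootReflection, corootReflection, Module.reflection_mul_reflection_pow_apply _ _ _ _
    (A s t * A t s - 2) (by simp [mul_comm])]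
  rcases hA.eq_zero_or_cos_pos hst with ⟨hM2, hst0, hts0⟩ | ⟨-, hneg, -⟩
  · simp only [hst0, hts0, mul_zero, zero_sub, hM2, Nat.cast_ofNat, sub_self, Int.zero_ediv,
      S_zero, eval_one, Int.reduceSub, Int.reduceDiv, S_neg_one, eval_zero, add_zero, mul_one,
      rootEval_single, zero_mul, neg_smul, one_smul, S_one, eval_X, one_mul, LinearEquiv.coe_one,
      id_eq]
    module
  obtain ⟨j, hj | hj⟩ := (M s t).even_or_odd'
  · obtain ⟨i, rfl⟩ := Nat.exists_eq_succ_of_ne_zero (by lia : j ≠ 0)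
    rw [hj, show 2 * i.succ - 1 = 2 * i + 1 by lia, (dihedralCoeff_eq_S A s t i).2] at hzero
    have hS : (S ℝ i).eval (A s t * A t s - 2) = 0 := by simpa [hneg.ne] using hzero
    rw [show ((M s t : ℤ) - 2) / 2 = i by lia, show ((M s t : ℤ) - 1) / 2 = i by lia, hS]
    simp
  · rw [hj, Nat.add_sub_cancel, (dihedralCoeff_eq_S A s t j).1] at hzero
    rw [show ((M s t : ℤ) - 2) / 2 = j - 1 by lia, show ((M s t : ℤ) - 1) / 2 = j by lia,
      show ((M s t : ℤ) - 3) / 2 = j - 1 by lia, show (M s t : ℤ) / 2 = j by lia, hzero]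
    simp

/-- The geometric representation of a Coxeter group on formal combinations of coroots. -/
noncomputable def geometricRep {W : Type*} [Group W] (cs : CoxeterSystem M W) :
    W →* ((B →₀ ℝ) ≃ₗ[ℝ] (B →₀ ℝ)) :=
  cs.lift ⟨hA.corootReflection, hA.corootReflection_mul_pow_eq_one⟩

variable {W : Type*} [Group W] {cs : CoxeterSystem M W} {v w : W} {k : ℕ}

theorem geometricRep_simple (cs : CoxeterSystem M W) (s : B) :
    hA.geometricRep cs (cs.simple s) = hA.corootReflection s :=
  cs.lift_apply_simple _ s

theorem geometricRep_simple_mul_inv (cs : CoxeterSystem M W) (s : B) (w : W) (x : B →₀ ℝ) :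
    hA.geometricRep cs (cs.simple s * w)⁻¹ x =
      hA.geometricRep cs w⁻¹ (hA.corootReflection s x) := by
  rw [mul_inv_rev, cs.inv_simple, map_mul, geometricRep_simple, LinearEquiv.mul_apply]

theorem geometricRep_altWord_inv (cs : CoxeterSystem M W) (s t : B) (k : ℕ) :
    hA.geometricRep cs (cs.wordProd (altWord t s (k + 1)))⁻¹ (single s 1) =
      dihedralCoeff A s t (k + 1) • single (alternate t s k) 1 +
        dihedralCoeff A s t k • single (alternate s t k) 1 := by
  induction k with
  | zero =>
    rw [altWord_succ, altWord_zero, cs.wordProd_singleton, cs.inv_simple, geometricRep_simple,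
      corootReflection_single, dihedralCoeff, dihedralCoeff, alternate_zero, alternate_zero]
    module
  | succ k ih =>
    rw [altWord_succ', cs.wordProd_append, cs.wordProd_singleton, mul_inv_rev, cs.inv_simple,
      map_mul, geometricRep_simple, LinearEquiv.mul_apply, ih, dihedralCoeff_add_two' A s t k]
    simp only [alternate_succ, map_add, map_smul, corootReflection_single_self,
      corootReflection_single]
    module

theorem geometricRep_altWord_mul_inv_nonneg (hst : s ≠ t) (hk : M s t = 0 ∨ k < M s t)
    (hvs : 0 ≤ hA.geometricRep cs v⁻¹ (single s 1))
    (hvt : 0 ≤ hA.geometricRep cs v⁻¹ (single t 1)) :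
    0 ≤ hA.geometricRep cs (cs.wordProd (altWord t s k) * v)⁻¹ (single s 1) := by
  cases k with
  | zero => simpa using hvs
  | succ k =>
    rw [mul_inv_rev, map_mul, LinearEquiv.mul_apply, geometricRep_altWord_inv, map_add, map_smul,
      map_smul]
    let p (r : B) : Prop := 0 ≤ hA.geometricRep cs v⁻¹ (single r 1)
    exact add_nonneg
      (smul_nonneg (hA.dihedralCoeff_nonneg hst hk) (alternate_cases (p := p) hvt hvs k))
      (smul_nonneg (hA.dihedralCoeff_nonneg hst (by lia)) (alternate_cases (p := p) hvs hvt k))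

theorem geometricRep_inv_nonneg (hs : ¬cs.IsLeftDescent w s) :
    0 ≤ hA.geometricRep cs w⁻¹ (single s 1) := by
  induction hn : cs.length w using Nat.strong_induction_on generalizing w s with
  | _ n ih =>
    rcases eq_or_ne w 1 with rfl | hw
    · simp
    obtain ⟨t, ht⟩ := cs.exists_leftDescent_of_ne_one hw
    have hst : s ≠ t := fun h => hs (h ▸ ht)
    obtain ⟨k, l, hk, hred, rfl, hls, hlt⟩ := exists_altWord_append_of_not_isLeftDescent hs t
    have hk0 : k ≠ 0 := by
      rintro rfl
      exact hlt ht
    have hlen : cs.length (cs.wordProd l) < n := by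
      rw [← hn, hred.eq, List.length_append, length_altWord]
      exact (cs.length_wordProd_le l).trans_lt (by lia)
    rw [cs.wordProd_append]
    exact hA.geometricRep_altWord_mul_inv_nonneg hst hk (ih _ hlen hls rfl) (ih _ hlen hlt rfl)

theorem geometricRep_inv_nonneg_iff :
    0 ≤ hA.geometricRep cs w⁻¹ (single s 1) ↔ ¬cs.IsLeftDescent w s := by
  refine ⟨fun hw hs => ?_, hA.geometricRep_inv_nonneg⟩
  have hsw := hA.geometricRep_inv_nonneg (cs.isLeftDescent_iff_not_isLeftDescent_mul.1 hs)
  rw [geometricRep_simple_mul_inv, corootReflection_single_self, map_neg, neg_nonneg] at hsw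
  have hzero := hsw.antisymm hw
  rw [LinearEquiv.map_eq_zero_iff] at hzero
  simp at hzero

end IsCoxeterCartan

end GeometricRepresentation

section Matsumoto

variable {B W : Type*} [Group W] {M : CoxeterMatrix B} {cs : CoxeterSystem M W} {s t : B} {w : W}

theorem exists_braid_append_of_isLeftDescent (hst : s ≠ t) (hs : cs.IsLeftDescent w s)
    (ht : cs.IsLeftDescent w t) :
    M s t ≠ 0 ∧ ∃ l, cs.IsReduced (altWord s t (M s t) ++ l) ∧
      w = cs.wordProd (altWord s t (M s t) ++ l) := by
  have hA := isCoxeterCartan_cosMatrix M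
  have hsw := cs.isLeftDescent_iff_not_isLeftDescent_mul.1 hs
  obtain ⟨k, l, hk, hred, hw, hls, hlt⟩ := exists_altWord_append_of_not_isLeftDescent hsw t
  have hred_cons : cs.IsReduced (altWord s t (k + 1) ++ l) := by
    rw [altWord_succ, List.cons_append, isReduced_cons_iff]
    exact ⟨hred, hw ▸ hsw⟩
  have hw_cons : w = cs.wordProd (altWord s t (k + 1) ++ l) := by
    rw [altWord_succ, List.cons_append, cs.wordProd_cons, ← hw, cs.simple_mul_simple_cancel_left]
  have hlong : ¬(M s t = 0 ∨ k + 1 < M s t) := fun hk => by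
    refine hA.geometricRep_inv_nonneg_iff.1 ?_ ht
    rw [hw_cons, cs.wordProd_append]
    rw [M.symmetric] at hk
    exact hA.geometricRep_altWord_mul_inv_nonneg hst.symm hk (hA.geometricRep_inv_nonneg hlt)
      (hA.geometricRep_inv_nonneg hls)
  have hM : M s t = k + 1 := by lia
  exact ⟨by lia, l, hM ▸ hred_cons, hM ▸ hw_cons⟩

theorem prod_map_eq_of_isReduced {N : Type*} [Monoid N] {f : B → N}
    (hf : ∀ s t, s ≠ t → M s t ≠ 0 →
      ((altWord s t (M s t)).map f).prod = ((altWord t s (M s t)).map f).prod)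
    {l l' : List B} (hl : cs.IsReduced l) (hl' : cs.IsReduced l')
    (h : cs.wordProd l = cs.wordProd l') : (l.map f).prod = (l'.map f).prod := by
  induction hn : l.length generalizing l l' with
  | zero =>
    have hlen : l'.length = 0 := by rw [← hl'.eq, ← h, hl.eq, hn]
    rw [List.length_eq_zero_iff.1 hn, List.length_eq_zero_iff.1 hlen]
  | succ n ih =>
    have same_head {s : B} {k k' : List B} (hk : cs.IsReduced (s :: k))
        (hk' : cs.IsReduced (s :: k')) (hprod : cs.wordProd (s :: k) = cs.wordProd (s :: k'))
        (hlen : k.length = n) : ((s :: k).map f).prod = ((s :: k').map f).prod := by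
      rw [cs.wordProd_cons, cs.wordProd_cons, mul_right_inj] at hprod
      simp only [List.map_cons, List.prod_cons,
        ih (isReduced_cons_iff.1 hk).1 (isReduced_cons_iff.1 hk').1 hprod hlen]
    have hn' : l'.length = n + 1 := by rw [← hl'.eq, ← h, hl.eq, hn]
    obtain ⟨s, k, rfl⟩ := List.exists_cons_of_length_eq_add_one hn
    obtain ⟨t, k', rfl⟩ := List.exists_cons_of_length_eq_add_one hn'
    rcases eq_or_ne s t with rfl | hst
    · exact same_head hl hl' h (by simpa using hn)
    obtain ⟨hM, r, hr, hw⟩ := exists_braid_append_of_isLeftDescent hst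
      (isLeftDescent_wordProd_cons hl) (h ▸ isLeftDescent_wordProd_cons hl')
    have hbraid := wordProd_altWord_append_braid cs s t r
    have hr' := isReduced_of_wordProd_eq hr hbraid (by simp)
    obtain ⟨m, hm⟩ := Nat.exists_eq_succ_of_ne_zero hM
    calc ((s :: k).map f).prod = ((altWord s t (M s t) ++ r).map f).prod := by
          rw [hm, altWord_succ] at hw hr ⊢
          exact same_head hl hr hw (by simpa using hn)
      _ = ((altWord t s (M s t) ++ r).map f).prod := by
          simp only [List.map_append, List.prod_append, hf s t hst hM]
      _ = ((t :: k').map f).prod := by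
          rw [hbraid, h] at hw
          rw [hm, altWord_succ] at hw hr' ⊢
          exact (same_head hl' hr' hw (by simpa using hn')).symm

end Matsumoto

section DihedralPaths

variable {B V : Type*} [AddCommGroup V] [Module ℝ V] {M : CoxeterMatrix B} {α : B → V}
  {αv : B → Module.Dual ℝ V} {ζ : ℝ → V} {s t : B} {T : ℝ} {j k n : ℕ}

/-- The Cartan matrix `α_s∨(α_t)` of a family of roots and coroots. -/
def cartanMatrix (α : B → V) (αv : B → Module.Dual ℝ V) : Matrix B B ℝ :=
  Matrix.of fun s t => αv s (α t)

/-- Continuity on `[0, ∞)` of a path as seen by the coroots. It requires no topology on the space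
in which the path lives. -/
def CorootContinuous (αv : B → Module.Dual ℝ V) (ζ : ℝ → V) : Prop :=
  ∀ s, ContinuousOn (αv s ∘ ζ) (Ici 0)

theorem pitman_apply (r : V) (rv : Module.Dual ℝ V) (ζ : ℝ → V) (τ : ℝ) :
    pitman r rv ζ τ = ζ τ - runInf (rv ∘ ζ) τ • r :=
  rfl

theorem comp_pitman (φ : Module.Dual ℝ V) (r : V) (rv : Module.Dual ℝ V) (ζ : ℝ → V) :
    φ ∘ pitman r rv ζ = φ ∘ ζ - φ r • runInf (rv ∘ ζ) := by
  ext τ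
  simp [pitman_apply, mul_comm]

theorem CorootContinuous.comp_pitman (hζ : CorootContinuous αv ζ) (s : B) :
    CorootContinuous αv (pitman (α s) (αv s) ζ) := fun t => by
  rw [PitmanTransform.comp_pitman]
  exact (hζ t).sub ((continuousOn_runInf (hζ s)).const_smul _)

theorem pitmanWord_nil (ζ : ℝ → V) : pitmanWord α αv [] ζ = ζ := rfl

theorem pitmanWord_cons (s : B) (l : List B) (ζ : ℝ → V) :
    pitmanWord α αv (s :: l) ζ = pitman (α s) (αv s) (pitmanWord α αv l ζ) :=
  rfl

theorem pitmanWord_append (l l' : List B) (ζ : ℝ → V) :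
    pitmanWord α αv (l ++ l') ζ = pitmanWord α αv l (pitmanWord α αv l' ζ) := by
  induction l with
  | nil => rfl
  | cons s l ih => rw [List.cons_append, pitmanWord_cons, ih, pitmanWord_cons]

theorem CorootContinuous.comp_pitmanWord (hζ : CorootContinuous αv ζ) (l : List B) :
    CorootContinuous αv (pitmanWord α αv l ζ) := by
  induction l with
  | nil => exact hζ
  | cons s l ih => exact ih.comp_pitman s

/-- The coefficient of `-α_s` in the Pitman transform of `ζ` along the alternating word `s t s …` of
length `k`: a nested infimum of the coroot coordinates of `ζ` weighted by dihedral coefficients. -/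
noncomputable def pitmanCoeff (α : B → V) (αv : B → Module.Dual ℝ V) (s t : B) (ζ : ℝ → V) (k : ℕ) :
    ℝ → ℝ :=
  nestedInf (fun i => dihedralCoeff (cartanMatrix α αv) s t i • (αv (alternate s t i) ∘ ζ)) k

theorem CorootContinuous.smul_alternate (hζ : CorootContinuous αv ζ) (c : ℕ → ℝ) (s t : B) (i : ℕ) :
    ContinuousOn (c i • (αv (alternate s t i) ∘ ζ)) (Ici 0) :=
  (hζ _).const_smul _

theorem sum_dihedralCoeff (A : Matrix B B ℝ) (s t : B) (x : B → ℝ) (n : ℕ) :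
    ∑ i ∈ Finset.range (n + 2), dihedralCoeff A s t i * x (alternate s t i) +
        ∑ i ∈ Finset.range n, dihedralCoeff A s t i * x (alternate s t i) =
      x s - A s t * ∑ i ∈ Finset.range (n + 1), dihedralCoeff A t s i * x (alternate t s i) := by
  induction n with
  | zero => simp [Finset.sum_range_succ, dihedralCoeff, sub_eq_add_neg]
  | succ n ih =>
    rw [show n + 1 + 2 = n + 2 + 1 from rfl, Finset.sum_range_succ _ (n + 2),
      Finset.sum_range_succ _ n,
      Finset.sum_range_succ (fun i => dihedralCoeff A t s i * x (alternate t s i)) (n + 1),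
      dihedralCoeff_add_two]
    simp only [alternate_succ] at ih ⊢
    linear_combination ih

theorem dihedralCoeff_smul_comp_pitman (α : B → V) (αv : B → Module.Dual ℝ V) (s t : B)
    (ζ : ℝ → V) (i : ℕ) :
    dihedralCoeff (cartanMatrix α αv) s t (i + 1) • (αv (alternate s t (i + 1)) ∘
        pitman (α (alternate s t i)) (αv (alternate s t i)) ζ) =
      dihedralCoeff (cartanMatrix α αv) s t (i + 1) • (αv (alternate s t (i + 1)) ∘ ζ) +
        (dihedralCoeff (cartanMatrix α αv) s t (i + 2) +
          dihedralCoeff (cartanMatrix α αv) s t i) • runInf (αv (alternate s t i) ∘ ζ) := by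
  rw [comp_pitman, dihedralCoeff_add_two', alternate_succ, cartanMatrix, Matrix.of_apply]
  module

variable (hA : IsCoxeterCartan M (cartanMatrix α αv))
include hA

theorem comp_pitman_self (s : B) (ζ : ℝ → V) :
    αv s ∘ pitman (α s) (αv s) ζ = αv s ∘ ζ - (2 : ℝ) • runInf (αv s ∘ ζ) := by
  rw [comp_pitman, show αv s (α s) = 2 from hA.diag s]

variable (hst : s ≠ t)
include hst

theorem pitmanCoeff_pitman_self (hζ : CorootContinuous αv ζ) (hj : M s t = 0 ∨ 2 * j < M s t) :
    pitmanCoeff α αv s t (pitman (α s) (αv s) ζ) (2 * j) + runInf (αv s ∘ ζ) =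
      pitmanCoeff α αv s t ζ (2 * j + 1) := by
  rw [← one_smul ℝ (runInf _)]
  refine nestedInf_pitman (d := fun i => dihedralCoeff (cartanMatrix α αv) s t (2 * i)) (hζ s)
    (hζ.smul_alternate _ s t) (fun i hi => hA.dihedralCoeff_nonneg hst (by lia))
    (fun i => by simp) (fun i => ?_) fun i => ?_
  · rw [alternate_two_mul, comp_pitman_self hA]
  · simpa [mul_add_one] using dihedralCoeff_smul_comp_pitman α αv s t ζ (2 * i)

theorem pitmanCoeff_pitman_other (hζ : CorootContinuous αv ζ)
    (hj : M s t = 0 ∨ 2 * j + 1 < M s t) :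
    pitmanCoeff α αv s t (pitman (α t) (αv t) ζ) (2 * j + 1) =
      pitmanCoeff α αv s t ζ (2 * j + 2) := by
  set c := dihedralCoeff (cartanMatrix α αv) s t
  set f : ℕ → ℝ → ℝ := fun i => c i • (αv (alternate s t i) ∘ ζ)
  set f' : ℕ → ℝ → ℝ := fun i => c i • (αv (alternate s t i) ∘ pitman (α t) (αv t) ζ)
  have tail : nestedInf (fun i => f' (i + 1)) (2 * j) + c 1 • runInf (αv t ∘ ζ) =
      nestedInf (fun i => f (i + 1)) (2 * j + 1) := by
    refine nestedInf_pitman (d := fun i => c (2 * i + 1)) (hζ t)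
      (fun i => hζ.smul_alternate c s t (i + 1)) (fun i hi => hA.dihedralCoeff_nonneg hst (by lia))
      (fun i => by simp) (fun i => ?_) fun i => ?_
    · simp only [f', alternate_succ, alternate_two_mul, comp_pitman_self hA]
    · simpa [f, f', c, mul_add_one] using dihedralCoeff_smul_comp_pitman α αv s t ζ (2 * i + 1)
  have head : f' 0 = f 0 + c 1 • runInf (αv t ∘ ζ) := by
    simp only [f, f', c, dihedralCoeff, alternate_zero, comp_pitman, cartanMatrix, Matrix.of_apply]
    module
  rw [pitmanCoeff, pitmanCoeff, nestedInf_succ, nestedInf_succ _ (2 * j + 1)]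
  change runInf (f' 0 + nestedInf (fun i => f' (i + 1)) (2 * j)) =
    runInf (f 0 + nestedInf (fun i => f (i + 1)) (2 * j + 1))
  rw [← tail, head]
  congr 1
  abel

theorem pitmanWord_altWord_apply (hζ : CorootContinuous αv ζ) (hk : M s t = 0 ∨ k < M s t)
    (τ : ℝ) :
    pitmanWord α αv (altWord s t (k + 1)) ζ τ =
      ζ τ - pitmanCoeff α αv s t ζ (k + 1) τ • α s - pitmanCoeff α αv t s ζ k τ • α t := by
  have hts : M t s = M s t := M.symmetric t s
  induction k generalizing ζ with
  | zero =>
    have h := congrFun (pitmanCoeff_pitman_self hA hst (j := 0) hζ (by lia)) τ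
    have hzero (s t : B) (ζ : ℝ → V) : pitmanCoeff α αv s t ζ 0 τ = 0 := rfl
    simp only [Pi.add_apply, mul_zero, hzero, zero_add] at h
    simp [altWord_succ, pitmanWord_cons, pitmanWord_nil, pitman_apply, h, hzero]
  | succ k ih =>
    rw [altWord_succ', pitmanWord_append, pitmanWord_cons, pitmanWord_nil, alternate_succ]
    obtain ⟨j, rfl | rfl⟩ := k.even_or_odd'
    · have hself := congrFun (pitmanCoeff_pitman_self hA hst.symm (j := j) hζ (by lia)) τ
      have hother := congrFun (pitmanCoeff_pitman_other hA hst (j := j) hζ (by lia)) τ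
      rw [alternate_two_mul, ih (hζ.comp_pitman t) (by lia), hother, ← hself, pitman_apply,
        Pi.add_apply]
      module
    · have hself := congrFun (pitmanCoeff_pitman_self hA hst (j := j + 1) hζ (by lia)) τ
      have hother := congrFun (pitmanCoeff_pitman_other hA hst.symm (j := j) hζ (by lia)) τ
      rw [alternate_succ, alternate_two_mul, ih (hζ.comp_pitman s) (by lia)]
      simp only [mul_add_one, add_assoc, Nat.reduceAdd, Pi.add_apply] at hself hother ⊢
      rw [hother, ← hself, pitman_apply]
      module

theorem pitmanCoeff_eq_of_not_lt (hM : M s t = n + 1) (ζ : ℝ → V) :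
    pitmanCoeff α αv s t ζ (n + 1) = pitmanCoeff α αv s t ζ n := by
  refine nestedInf_succ_of_eq_zero ?_
  have hzero := hA.dihedralCoeff_sub_one_eq_zero hst (by lia)
  rw [hM, Nat.add_sub_cancel] at hzero
  rw [hzero, zero_smul]

theorem pitmanWord_braid (hζ : CorootContinuous αv ζ) (hM : M s t ≠ 0) :
    pitmanWord α αv (altWord s t (M s t)) ζ = pitmanWord α αv (altWord t s (M s t)) ζ := by
  obtain ⟨n, hn⟩ := Nat.exists_eq_succ_of_ne_zero hM
  have hts : M t s = n + 1 := by rw [M.symmetric, hn]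
  funext τ
  rw [hn, pitmanWord_altWord_apply hA hst hζ (by lia),
    pitmanWord_altWord_apply hA hst.symm hζ (by lia), pitmanCoeff_eq_of_not_lt hA hst hn,
    pitmanCoeff_eq_of_not_lt hA hst.symm hts]
  abel

theorem runInf_comp_pitmanWord_altWord (hζ : CorootContinuous αv ζ) (hk : M s t = 0 ∨ k + 1 < M s t)
    (τ : ℝ) :
    runInf (αv s ∘ pitmanWord α αv (altWord t s (k + 1)) ζ) τ =
      pitmanCoeff α αv s t ζ (k + 2) τ - pitmanCoeff α αv s t ζ k τ := by
  have hts : M t s = M s t := M.symmetric t s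
  have hpitman := pitman_apply (α s) (αv s) (pitmanWord α αv (altWord t s (k + 1)) ζ) τ
  rw [← pitmanWord_cons, ← altWord_succ, pitmanWord_altWord_apply hA hst hζ hk,
    pitmanWord_altWord_apply hA hst.symm hζ (by lia)] at hpitman
  have hcoord := congrArg (αv s) hpitman
  simp only [map_sub, map_smul, smul_eq_mul, show αv s (α s) = 2 from hA.diag s] at hcoord
  linarith

theorem pitmanCoeff_eq_sum (hζ : CorootContinuous αv ζ) (hT : 0 ≤ T)
    (hs : IsMinOn (αv s ∘ ζ) (Icc 0 T) T) (ht : IsMinOn (αv t ∘ ζ) (Icc 0 T) T)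
    (hn : M s t = 0 ∨ n ≤ M s t) :
    pitmanCoeff α αv s t ζ n T = ∑ i ∈ Finset.range n,
      dihedralCoeff (cartanMatrix α αv) s t i * αv (alternate s t i) (ζ T) := by
  refine nestedInf_eq_sum hT (hζ.smul_alternate _ s t) fun i hi u hu => ?_
  let p (r : B) : Prop := IsMinOn (αv r ∘ ζ) (Icc 0 T) T
  exact mul_le_mul_of_nonneg_left (alternate_cases (p := p) hs ht i hu)
    (hA.dihedralCoeff_nonneg hst (by lia))

theorem isMinOn_comp_pitmanWord_altWord (hζ : CorootContinuous αv ζ) (hT : 0 ≤ T)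
    (hs : IsMinOn (αv s ∘ ζ) (Icc 0 T) T) (ht : IsMinOn (αv t ∘ ζ) (Icc 0 T) T)
    (hk : M s t = 0 ∨ k < M s t) :
    IsMinOn (αv s ∘ pitmanWord α αv (altWord t s k) ζ) (Icc 0 T) T := by
  cases k with
  | zero => exact hs
  | succ k =>
    have hts : M t s = M s t := M.symmetric t s
    refine isMinOn_of_runInf_eq (hζ.comp_pitmanWord _ s) ?_
    rw [runInf_comp_pitmanWord_altWord hA hst hζ hk, Function.comp_apply,
      pitmanWord_altWord_apply hA hst.symm hζ (by lia), map_sub, map_sub, map_smul, map_smul,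
      pitmanCoeff_eq_sum hA hst hζ hT hs ht (by lia),
      pitmanCoeff_eq_sum hA hst hζ hT hs ht (by lia),
      pitmanCoeff_eq_sum hA hst.symm hζ hT ht hs (by lia), show αv s (α s) = 2 from hA.diag s]
    have hsum := sum_dihedralCoeff (cartanMatrix α αv) s t (fun r => αv r (ζ T)) k
    simp only [smul_eq_mul, cartanMatrix, Matrix.of_apply] at hsum ⊢
    linarith

end DihedralPaths

section WordIndependence

variable {B V W : Type*} [AddCommGroup V] [Module ℝ V] [Group W] {M : CoxeterMatrix B}
  {cs : CoxeterSystem M W} {α : B → V} {αv : B → Module.Dual ℝ V} {ζ η : ℝ → V} {s : B} {T : ℝ}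
  {l l' : List B}

/-- The Pitman transform along `α_s`, as an element of the monoid of self-maps of the set of
continuous paths. -/
noncomputable def pitmanEnd (α : B → V) (αv : B → Module.Dual ℝ V) (s : B) :
    Function.End {ζ : ℝ → V // CorootContinuous αv ζ} :=
  fun ζ => ⟨pitman (α s) (αv s) ζ, ζ.2.comp_pitman s⟩

theorem coe_prod_map_pitmanEnd (l : List B) (ζ : {ζ : ℝ → V // CorootContinuous αv ζ}) :
    ((l.map (pitmanEnd α αv)).prod ζ : ℝ → V) = pitmanWord α αv l ζ := by
  induction l with
  | nil => rfl
  | cons s l ih =>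
    rw [pitmanWord_cons, ← ih]
    rfl

theorem pitmanWord_eq_of_isReduced (hA : IsCoxeterCartan M (cartanMatrix α αv))
    (hζ : CorootContinuous αv ζ) (hl : cs.IsReduced l) (hl' : cs.IsReduced l')
    (h : cs.wordProd l = cs.wordProd l') : pitmanWord α αv l ζ = pitmanWord α αv l' ζ := by
  have hbraid (s t : B) (hst : s ≠ t) (hM : M s t ≠ 0) :
      ((altWord s t (M s t)).map (pitmanEnd α αv)).prod =
        ((altWord t s (M s t)).map (pitmanEnd α αv)).prod := by
    funext ζ
    refine Subtype.ext ?_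
    rw [coe_prod_map_pitmanEnd, coe_prod_map_pitmanEnd, pitmanWord_braid hA hst ζ.2 hM]
  rw [← coe_prod_map_pitmanEnd l ⟨ζ, hζ⟩, prod_map_eq_of_isReduced hbraid hl hl' h,
    coe_prod_map_pitmanEnd]

theorem isMinOn_comp_pitmanWord (hA : IsCoxeterCartan M (cartanMatrix α αv))
    (hζ : CorootContinuous αv ζ) (hT : 0 ≤ T) (hmin : ∀ s, IsMinOn (αv s ∘ ζ) (Icc 0 T) T)
    (hl : cs.IsReduced l) (hs : ¬cs.IsLeftDescent (cs.wordProd l) s) :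
    IsMinOn (αv s ∘ pitmanWord α αv l ζ) (Icc 0 T) T := by
  induction hn : l.length using Nat.strong_induction_on generalizing l s with
  | _ n ih =>
    cases l with
    | nil => exact hmin s
    | cons t l =>
      have ht : cs.IsLeftDescent (cs.wordProd (t :: l)) t := isLeftDescent_wordProd_cons hl
      have hst : s ≠ t := by rintro rfl; exact hs ht
      obtain ⟨k, l', hk, hred, hw, hs', ht'⟩ := exists_altWord_append_of_not_isLeftDescent hs t
      have hk0 : k ≠ 0 := by
        rintro rfl
        exact ht' (by rwa [hw, altWord_zero, List.nil_append] at ht)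
      have hlen : (altWord t s k ++ l').length = n := by
        rw [← hred.eq, ← hw, hl.eq, hn]
      rw [List.length_append, length_altWord] at hlen
      have hl' : cs.IsReduced l' := by simpa using hred.drop k
      rw [pitmanWord_eq_of_isReduced hA hζ hl hred hw, pitmanWord_append]
      exact isMinOn_comp_pitmanWord_altWord hA hst (hζ.comp_pitmanWord l') hT
        (ih _ (by lia) hl' hs' rfl) (ih _ (by lia) hl' ht' rfl) hk

theorem eqOn_pitman {r : V} {rv : Module.Dual ℝ V} (h : EqOn ζ η (Icc 0 T)) :
    EqOn (pitman r rv ζ) (pitman r rv η) (Icc 0 T) := fun t ht => by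
  have hrv : EqOn (rv ∘ ζ) (rv ∘ η) (Icc 0 t) := fun u hu =>
    congrArg rv (h ⟨hu.1, hu.2.trans ht.2⟩)
  rw [pitman_apply, pitman_apply, h ht, runInf_congr hrv]

theorem eqOn_pitmanWord (h : EqOn ζ η (Icc 0 T)) (l : List B) :
    EqOn (pitmanWord α αv l ζ) (pitmanWord α αv l η) (Icc 0 T) := by
  induction l with
  | nil => exact h
  | cons s l ih => exact eqOn_pitman ih

end WordIndependence

end PitmanTransform

open PitmanTransform in
theorem pitmanWord_codominant_general {B V W : Type*} [AddCommGroup V] [Module ℝ V] [Group W]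
    {M : CoxeterMatrix B} (cs : CoxeterSystem M W) {α : B → V} {αv : B → Module.Dual ℝ V}
    (hA : IsCoxeterCartan M (cartanMatrix α αv)) {T : ℝ} {π : ℝ → V}
    (hcont : ∀ s, ContinuousOn (αv s ∘ π) (Icc 0 T))
    (hcodom : ∀ s, IsMinOn (αv s ∘ π) (Icc 0 T) T)
    {l : List B} (hl : cs.IsReduced l) {s : B} (hs : ¬cs.IsLeftDescent (cs.wordProd l) s) :
    IsMinOn (αv s ∘ pitmanWord α αv l π) (Icc 0 T) T := by
  intro t ht
  have hT : 0 ≤ T := ht.1.trans ht.2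
  let ζ : ℝ → V := fun t => π (min t T)
  have hζπ : EqOn ζ π (Icc 0 T) := fun t ht => by simp only [ζ, min_eq_left ht.2]
  have hζ : CorootContinuous αv ζ := fun s =>
    (hcont s).comp (by fun_prop) fun t ht => ⟨le_min ht hT, min_le_right t T⟩
  have hmin (s : B) : IsMinOn (αv s ∘ ζ) (Icc 0 T) T := fun t ht => by
    simpa [hζπ ht, hζπ ⟨hT, le_rfl⟩] using hcodom s ht
  have hP := eqOn_pitmanWord (α := α) (αv := αv) hζπ l
  simpa [hP ht, hP ⟨hT, le_rfl⟩] using isMinOn_comp_pitmanWord hA hζ hT hmin hl hs ht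

/-- Lemma 4.3 of Biane–Bougerol–O'Connell: if `π` is a codominant path, `w ∈ W` and
`s ∈ S` satisfies `ℓ(σ_s w) > ℓ(w)`, then `P_w π` is `α_s`-codominant.  Here `P_w` is
computed along any reduced word `l` for `w`; a path `η` is codominant if
`α_{s'}∨(η t) ≥ α_{s'}∨(η T)` for all `t ∈ [0,T]` and all `s'`. -/
theorem pitmanWord_codominant
    {V : Type*} [NormedAddCommGroup V] [NormedSpace ℝ V] [FiniteDimensional ℝ V]
    (T : ℝ) (hT : 0 < T)
    {B : Type*} [Fintype B] {W : Type*} [Group W]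
    (M : CoxeterMatrix B) (cs : CoxeterSystem M W)
    (α : B → V) (αv : B → Module.Dual ℝ V)
    (hpair : ∀ s, αv s (α s) = 2)
    (ρ : W →* (V ≃ₗ[ℝ] V)) (hρinj : Function.Injective ρ)
    (hρs : ∀ s v, ρ (cs.simple s) v = v - αv s v • α s)
    (hM : ∀ s s' : B, s ≠ s' →
      (M s s' = 2 ∧ αv s (α s') = 0 ∧ αv s' (α s) = 0) ∨
      (αv s (α s') < 0 ∧ αv s' (α s) < 0 ∧
        αv s (α s') * αv s' (α s) = 4 * Real.cos (Real.pi / (M s s' : ℝ)) ^ 2))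
    (π : ℝ → V) (hcont : ContinuousOn π (Set.Icc 0 T)) (h0 : π 0 = 0)
    (hcodom : ∀ s : B, ∀ t ∈ Set.Icc 0 T, αv s (π T) ≤ αv s (π t))
    (w : W) (l : List B) (hl : cs.wordProd l = w) (hlred : cs.IsReduced l)
    (s : B) (hs : cs.length w < cs.length (cs.simple s * w)) :
    ∀ t ∈ Set.Icc 0 T,
      αv s (pitmanWord α αv l π T) ≤ αv s (pitmanWord α αv l π t) := by
  subst hl
  exact pitmanWord_codominant_general cs ⟨hpair, hM⟩
    (fun s => (αv s).continuous_of_finiteDimensional.comp_continuousOn hcont) hcodom hlred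
    hs.not_gt
end
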